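/- In the d_5 tower, L_1 ≡ 21·t^4 (mod 49), L_2 ≡ 14·t (mod 49), and L_3 ≡ 35·(p_0 + p_1)·t^3 (mod 49), where congruence of Laurent series means all corresponding coefficients are congruent. -/

import Mathlib

noncomputable section

/-- `J b = ∏_{k=1}^∞ (1 - q^{b·k})` as a formal power series with integer coefficients. -/
def J (b : ℕ) : PowerSeries ℤ :=
  PowerSeries.mk fun n =>
    PowerSeries.coeff n
      (∏ k ∈ Finset.range (n + 1), (1 - (PowerSeries.X : PowerSeries ℤ) ^ (b * (k + 1))))

/-!
Write `A₅ = F · K(q⁷)` with `F = q¹² J₂⁵ / J₁¹⁶`, so that `U₇ (A₅ g) = K · U₇ (F g)`. Besides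
the quasimodular form `P = E₂`, take the level-two forms `A = 2 P(q²) - P(q)` and
`D = q J₂¹⁶ / J₁⁸`. By Ramanujan's differential equations `θ = q d/dq` maps `A`, `D` and `P` to
polynomials in each other, and `θF / F` is a linear combination of `A`, `P` and `1`. This yields
`θ³F + F ≡ -7 F W (mod 49)` for an explicit `W`. As `U₇ θ³ ≡ 0 (mod 49)`, it turns `L₁` modulo `49`
into `U₇ (F W)` modulo `7`.

Modulo `7` the Eisenstein series `E₆` is `1`. Hence `A` is invertible, `D` and `P` are Laurent
polynomials in `A`, and `θA = A⁻¹ - A⁵`. Since `U₇` kills derivatives and takes `f⁷ g` to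
`f · U₇ g`, its value on a Laurent polynomial in `A` is found by reducing exponents. The only other
constituent of `W` is `∑ σ₅(n) qⁿ`, whose derivative is a combination of `P` and `P⁷`. The
congruences for `L₂` and `L₃` come from `U₇ (t⁴) ≡ 3 t` and from `U₇ (F t)` modulo `7`.
-/

open PowerSeries
open ArithmeticFunction (sigma)

/-! ### The Euler operator -/

section EulerOperator

variable {R S : Type*} [CommRing R] [CommRing S]

/-- The Euler operator `q d/dq` on formal power series, as a derivation. -/
def qDeriv : Derivation R R⟦X⟧ R⟦X⟧ := (X : R⟦X⟧) • derivative R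

@[simp]
lemma coeff_qDeriv (f : R⟦X⟧) (n : ℕ) : coeff n (qDeriv f) = n * coeff n f := by
  cases n with
  | zero => simp [qDeriv]
  | succ n =>
    simp only [qDeriv, Derivation.smul_apply, smul_eq_mul, coeff_succ_X_mul, coeff_derivative]
    push_cast
    ring

@[simp]
lemma constantCoeff_qDeriv (f : R⟦X⟧) : constantCoeff (qDeriv f) = 0 := by
  rw [← coeff_zero_eq_constantCoeff_apply, coeff_qDeriv, Nat.cast_zero, zero_mul]

lemma qDeriv_mul (f g : R⟦X⟧) : qDeriv (f * g) = f * qDeriv g + g * qDeriv f :=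
  qDeriv.leibniz f g

lemma qDeriv_pow (f : R⟦X⟧) (n : ℕ) : qDeriv (f ^ n) = n * f ^ (n - 1) * qDeriv f := by
  simp [Derivation.leibniz_pow, mul_assoc]

@[simp]
lemma qDeriv_ofNat (n : ℕ) [n.AtLeastTwo] : qDeriv (ofNat(n) : R⟦X⟧) = 0 :=
  qDeriv.map_natCast n

@[simp]
lemma qDeriv_X : qDeriv (X : R⟦X⟧) = X := by
  simp [qDeriv]

lemma map_qDeriv (φ : R →+* S) (f : R⟦X⟧) : map φ (qDeriv f) = qDeriv (map φ f) := by
  ext n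
  simp

lemma coeff_ofNat_mul (k : ℕ) [k.AtLeastTwo] (f : R⟦X⟧) (n : ℕ) :
    coeff n (ofNat(k) * f) = ofNat(k) * coeff n f := by
  rw [← map_ofNat C k, coeff_C_mul]

end EulerOperator

/-! ### Eisenstein series -/

/-- The divisor power series `∑ σ_k(n) q ^ n`. -/
def sigmaSeries (k : ℕ) : ℤ⟦X⟧ := mk fun n => (sigma k n : ℤ)

/-- Ramanujan's `P`, the `q`-expansion of the quasimodular Eisenstein series `E₂`. -/
def eisP : ℤ⟦X⟧ := 1 - 24 * sigmaSeries 1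

/-- Ramanujan's `Q`, the `q`-expansion of `E₄`. -/
def eisQ : ℤ⟦X⟧ := 1 + 240 * sigmaSeries 3

/-- Ramanujan's `R`, the `q`-expansion of `E₆`. -/
def eisR : ℤ⟦X⟧ := 1 - 504 * sigmaSeries 5

@[simp]
lemma coeff_sigmaSeries (k n : ℕ) : coeff n (sigmaSeries k) = (sigma k n : ℤ) := by
  simp [sigmaSeries]

@[simp]
lemma constantCoeff_sigmaSeries (k : ℕ) : constantCoeff (sigmaSeries k) = 0 := by
  rw [← coeff_zero_eq_constantCoeff_apply, coeff_sigmaSeries, ArithmeticFunction.map_zero]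
  exact Nat.cast_zero

@[simp]
lemma constantCoeff_eisP : constantCoeff eisP = 1 := by
  simp [eisP]

@[simp]
lemma constantCoeff_eisQ : constantCoeff eisQ = 1 := by
  simp [eisQ]

@[simp]
lemma constantCoeff_eisR : constantCoeff eisR = 1 := by
  simp [eisR]

lemma coeff_eisP (n : ℕ) : coeff n eisP = if n = 0 then 1 else -24 * (sigma 1 n : ℤ) := by
  simp only [eisP, map_sub, coeff_one, coeff_ofNat_mul, coeff_sigmaSeries]
  split_ifs with hn <;> simp [hn]

lemma coeff_eisQ (n : ℕ) : coeff n eisQ = if n = 0 then 1 else 240 * (sigma 3 n : ℤ) := by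
  simp only [eisQ, map_add, coeff_one, coeff_ofNat_mul, coeff_sigmaSeries]
  split_ifs with hn <;> simp [hn]

lemma coeff_eisR (n : ℕ) : coeff n eisR = if n = 0 then 1 else -504 * (sigma 5 n : ℤ) := by
  simp only [eisR, map_sub, coeff_one, coeff_ofNat_mul, coeff_sigmaSeries]
  split_ifs with hn <;> simp [hn]

/-! ### Ramanujan's differential equations -/

section QExpansion

open UpperHalfPlane hiding I
open Complex ModularForm Derivative
open scoped Manifold MatrixGroups Topology

/-- `f` is a holomorphic function on the upper half plane with `q`-expansion `c`, where
`q = exp (2πiτ)`. Unlike `UpperHalfPlane.qExpansion` this does not require `f` to be modular, so it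
covers `E₂` and derivatives. -/
structure HasQExpansion (f : ℍ → ℂ) (c : ℂ⟦X⟧) : Prop where
  mdifferentiable : MDiff f
  hasSum : ∀ τ : ℍ, HasSum (fun m : ℕ => coeff m c • Function.Periodic.qParam 1 τ ^ m) (f τ)

namespace HasQExpansion

variable {f g : ℍ → ℂ} {c d : ℂ⟦X⟧}

lemma isBoundedAtImInfty (h : HasQExpansion f c) : IsBoundedAtImInfty f :=
  isBoundedAtImInfty_of_hasSum_qExpansion one_pos h.hasSum

lemma periodic (h : HasQExpansion f c) : Function.Periodic (f ∘ ofComplex) (1 : ℝ) := by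
  intro w
  have im_add_one : (w + (1 : ℝ)).im = w.im := by simp
  by_cases hw : 0 < w.im
  · have hw' : 0 < (w + (1 : ℝ)).im := im_add_one ▸ hw
    have qParam_add_one :
        Function.Periodic.qParam 1 (w + (1 : ℝ)) = Function.Periodic.qParam 1 w := by
      simp [Function.Periodic.qParam, mul_add, Complex.exp_add]
    have hsum := h.hasSum ⟨w + (1 : ℝ), hw'⟩
    simp only [qParam_add_one] at hsum
    simpa only [Function.comp_apply, ofComplex_apply_of_im_pos hw,
      ofComplex_apply_of_im_pos hw'] using hsum.unique (h.hasSum ⟨w, hw⟩)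
  · simp only [Function.comp_apply, ofComplex_apply_of_im_nonpos (not_lt.mp hw),
      ofComplex_apply_of_im_nonpos (im_add_one.trans_le (not_lt.mp hw))]

lemma analyticAt_cuspFunction (h : HasQExpansion f c) : AnalyticAt ℂ (cuspFunction 1 f) 0 :=
  analyticAt_cuspFunction_zero one_pos h.periodic h.mdifferentiable h.isBoundedAtImInfty

lemma eq_qExpansion (h : HasQExpansion f c) : c = qExpansion 1 f := by
  ext m
  have series_c :=
    (hasFPowerSeriesOnBall_cuspFunction one_pos h.analyticAt_cuspFunction h.hasSum)
  have series_f :=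
    (hasFPowerSeriesOnBall_cuspFunction one_pos h.analyticAt_cuspFunction
      (UpperHalfPlane.hasSum_qExpansion one_pos h.periodic h.mdifferentiable h.isBoundedAtImInfty))
  simpa using congr_arg (FormalMultilinearSeries.coeff · m)
    (series_c.hasFPowerSeriesAt.eq_formalMultilinearSeries series_f.hasFPowerSeriesAt)

lemma add (hf : HasQExpansion f c) (hg : HasQExpansion g d) : HasQExpansion (f + g) (c + d) :=
  ⟨hf.mdifferentiable.add hg.mdifferentiable,
    fun τ => by simpa [add_mul] using (hf.hasSum τ).add (hg.hasSum τ)⟩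

lemma smul (r : ℂ) (hf : HasQExpansion f c) : HasQExpansion (r • f) (r • c) :=
  ⟨hf.mdifferentiable.const_smul r,
    fun τ => by simpa [mul_assoc] using (hf.hasSum τ).mul_left r⟩

lemma sub (hf : HasQExpansion f c) (hg : HasQExpansion g d) : HasQExpansion (f - g) (c - d) := by
  simpa [sub_eq_add_neg] using hf.add (hg.smul (-1))

lemma mul (hf : HasQExpansion f c) (hg : HasQExpansion g d) : HasQExpansion (f * g) (c * d) := by
  refine ⟨hf.mdifferentiable.mul hg.mdifferentiable, fun τ => ?_⟩
  have summable_f := (hf.hasSum τ).summable.norm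
  have summable_g := (hg.hasSum τ).summable.norm
  have cauchy :=
    (summable_norm_sum_mul_antidiagonal_of_summable_norm summable_f summable_g).of_norm.hasSum
  rw [← tsum_mul_tsum_eq_tsum_sum_antidiagonal_of_summable_norm summable_f summable_g,
    (hf.hasSum τ).tsum_eq, (hg.hasSum τ).tsum_eq] at cauchy
  refine cauchy.congr_fun fun m => ?_
  rw [coeff_mul, Finset.sum_smul]
  refine Finset.sum_congr rfl fun p hp => ?_
  rw [← Finset.HasAntidiagonal.mem_antidiagonal.mp hp, pow_add]
  simp only [smul_eq_mul]
  ring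

lemma normalizedDeriv_apply_eq (h : HasQExpansion f c) (τ : ℍ) :
    normalizedDerivOfComplex f τ = Function.Periodic.qParam 1 τ *
      deriv (cuspFunction 1 f) (Function.Periodic.qParam 1 τ) := by
  have qParam_mem : Function.Periodic.qParam 1 τ ∈ Metric.ball (0 : ℂ) 1 := by
    simpa using Function.Periodic.norm_qParam_lt_one one_pos τ.im_pos
  have hasDerivAt_cuspFunction := ((differentiableOn_cuspFunction_ball one_pos h.periodic
    h.mdifferentiable h.isBoundedAtImInfty).differentiableAt
      (Metric.isOpen_ball.mem_nhds (by simpa using qParam_mem))).hasDerivAt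
  have hasDerivAt_qParam : HasDerivAt (fun w : ℂ => Function.Periodic.qParam 1 w)
      (2 * Real.pi * I * Function.Periodic.qParam 1 τ) τ := by
    simpa [Function.Periodic.qParam, mul_comm] using
      ((hasDerivAt_id (τ : ℂ)).const_mul (2 * Real.pi * I)).cexp
  have factors : f ∘ ofComplex =ᶠ[𝓝 (τ : ℂ)]
      fun w => cuspFunction 1 f (Function.Periodic.qParam 1 w) := by
    filter_upwards [isOpen_upperHalfPlaneSet.mem_nhds τ.im_pos] with w hw
    simpa only [Function.comp_apply, ofComplex_apply_of_im_pos hw] using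
      (eq_cuspFunction (h := 1) ⟨w, hw⟩ one_ne_zero h.periodic).symm
  have chain_rule := (hasDerivAt_cuspFunction.comp (τ : ℂ) hasDerivAt_qParam).deriv
  rw [normalizedDerivOfComplex, factors.deriv_eq]
  refine (congrArg _ chain_rule).trans ?_
  field_simp [Complex.two_pi_I_ne_zero]

lemma normalizedDeriv (h : HasQExpansion f c) :
    HasQExpansion (normalizedDerivOfComplex f) (qDeriv c) := by
  refine ⟨normalizedDerivOfComplex_mdifferentiable h.mdifferentiable, fun τ => ?_⟩
  have taylor := Complex.hasSum_taylorSeries_on_ball (c := 0) (r := 1)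
    (f := deriv (cuspFunction 1 f)) (z := Function.Periodic.qParam 1 τ)
    (by simpa using (differentiableOn_cuspFunction_ball one_pos h.periodic h.mdifferentiable
      h.isBoundedAtImInfty).deriv Metric.isOpen_ball)
    (by simpa using Function.Periodic.norm_qParam_lt_one one_pos τ.im_pos)
  rw [h.normalizedDeriv_apply_eq, ← hasSum_nat_add_iff' 1]
  simp only [Finset.range_one, Finset.sum_singleton, coeff_qDeriv, Nat.cast_zero, zero_mul,
    zero_smul, sub_zero]
  refine (taylor.mul_left (Function.Periodic.qParam 1 τ)).congr_fun fun m => ?_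
  rw [h.eq_qExpansion, qExpansion_coeff, iteratedDeriv_succ', Nat.factorial_succ]
  have : ((m : ℂ) + 1) ≠ 0 := mod_cast m.succ_ne_zero
  push_cast
  simp only [smul_eq_mul, sub_zero, pow_succ]
  field_simp

lemma eq_zero_of_slash_invariant (h : HasQExpansion f c) {k : ℕ} (hk : k < 12)
    (slash : ∀ γ : SL(2, ℤ), f ∣[(k : ℤ)] γ = f) (hc : constantCoeff c = 0) : c = 0 := by
  let F : ModularForm 𝒮ℒ (k : ℤ) :=
    { toFun := f
      slash_action_eq' := by
        rintro _ ⟨γ, rfl⟩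
        exact slash γ
      holo' := h.mdifferentiable
      bdd_at_cusps' := fun {c} hc => by
        rw [Subgroup.IsArithmetic.isCusp_iff_isCusp_SL2Z] at hc
        rw [OnePoint.isBoundedAt_iff_forall_SL2Z hc]
        exact fun γ _ => (slash γ).symm ▸ h.isBoundedAtImInfty }
  have F_eq_zero : F = 0 := by
    refine sturm_bound_levelOne_nat ?_
    rw [Nat.div_eq_of_lt hk, Nat.cast_zero, pos_iff_ne_zero,
      PowerSeries.order_ne_zero_iff_constCoeff_eq_zero, ← hc, h.eq_qExpansion]
    rfl
  have f_eq_zero : f = 0 := congrArg (fun G : ModularForm 𝒮ℒ (k : ℤ) => (G : ℍ → ℂ)) F_eq_zero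
  rw [h.eq_qExpansion, f_eq_zero, qExpansion_zero]

end HasQExpansion

lemma hasQExpansion_E2 :
    HasQExpansion EisensteinSeries.E2 (map (Int.castRingHom ℂ) eisP) := by
  refine ⟨E2_mdifferentiable, fun τ => ?_⟩
  refine (EisensteinSeries.hasSum_qExpansion_E2 (z := τ)).congr_fun fun m => ?_
  rw [coeff_map, coeff_eisP]
  split_ifs <;> simp [Function.Periodic.qParam]

lemma hasQExpansion_E4 : HasQExpansion E₄ (map (Int.castRingHom ℂ) eisQ) := by
  refine ⟨E₄.holo', fun τ => ?_⟩
  refine (ModularForm.hasSum_qExpansion E₄ one_pos one_mem_strictPeriods_SL τ).congr_fun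
    fun m => congrArg (· • _) ?_
  have bernoulli_four : bernoulli 4 = -1 / 30 := by decide +kernel
  refine Eq.trans ?_ (EisensteinSeries.E_qExpansion_coeff (by norm_num) (by decide) m).symm
  rw [coeff_map, coeff_eisQ, bernoulli_four]
  split_ifs <;> norm_num

lemma hasQExpansion_E6 : HasQExpansion E₆ (map (Int.castRingHom ℂ) eisR) := by
  refine ⟨E₆.holo', fun τ => ?_⟩
  refine (ModularForm.hasSum_qExpansion E₆ one_pos one_mem_strictPeriods_SL τ).congr_fun
    fun m => congrArg (· • _) ?_
  have bernoulli_six : bernoulli 6 = 1 / 42 := by decide +kernel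
  refine Eq.trans ?_ (EisensteinSeries.E_qExpansion_coeff (by norm_num) (by decide) m).symm
  rw [coeff_map, coeff_eisR, bernoulli_six]
  split_ifs <;> norm_num

lemma E4_slash (γ : SL(2, ℤ)) : (E₄ : ℍ → ℂ) ∣[(4 : ℤ)] γ = E₄ :=
  E₄.slash_action_eq' _ ⟨γ, rfl⟩

lemma E6_slash (γ : SL(2, ℤ)) : (E₆ : ℍ → ℂ) ∣[(6 : ℤ)] γ = E₆ :=
  E₆.slash_action_eq' _ ⟨γ, rfl⟩

lemma hasDerivAt_D2_comp_ofComplex (γ : SL(2, ℤ)) (z : ℍ) :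
    HasDerivAt (EisensteinSeries.D2 γ ∘ ofComplex)
      (-(2 * Real.pi * I * (γ 1 0 / denom γ z) ^ 2)) z := by
  have hasDerivAt_inv := (hasDerivAt_denom_zpow (γ : GL (Fin 2) ℝ) (-1) z).const_mul
    (2 * Real.pi * I * γ 1 0)
  have D2_eventuallyEq : EisensteinSeries.D2 γ ∘ ofComplex =ᶠ[𝓝 (z : ℂ)]
      fun w => (2 * Real.pi * I * γ 1 0) * denom (γ : GL (Fin 2) ℝ) w ^ (-1 : ℤ) := by
    filter_upwards [isOpen_upperHalfPlaneSet.mem_nhds z.im_pos] with w hw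
    simp only [Function.comp_apply, ofComplex_apply_of_im_pos hw, EisensteinSeries.D2]
    rw [zpow_neg_one, div_eq_mul_inv]
  refine (hasDerivAt_inv.congr_of_eventuallyEq D2_eventuallyEq).congr_deriv ?_
  norm_num [zpow_neg, zpow_ofNat]
  field_simp

lemma mdifferentiable_D2 (γ : SL(2, ℤ)) : MDiff (EisensteinSeries.D2 γ) :=
  UpperHalfPlane.mdifferentiable_iff.mpr fun w hw =>
    (hasDerivAt_D2_comp_ofComplex γ ⟨w, hw⟩).differentiableAt.differentiableWithinAt

lemma normalizedDeriv_D2 (γ : SL(2, ℤ)) :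
    normalizedDerivOfComplex (EisensteinSeries.D2 γ) =
      (1 / (24 * riemannZeta 2)) • EisensteinSeries.D2 γ ^ 2 := by
  ext z
  have hpi : (Real.pi : ℂ) ≠ 0 := mod_cast Real.pi_ne_zero
  rw [normalizedDerivOfComplex, (hasDerivAt_D2_comp_ofComplex γ z).deriv]
  simp only [Pi.smul_apply, Pi.pow_apply, EisensteinSeries.D2, riemannZeta_two, smul_eq_mul]
  field_simp
  norm_num
  ring

-- With `κ = 1 / (2 ζ(2))`, the correction `E₂ ↦ E₂ - κ • D2 γ` changes `12 • D E₂` and `E₂ ^ 2` by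
-- the same amount, because `12 • D (D2 γ) = κ • D2 γ ^ 2`.
lemma normalizedDeriv_E2_sub_sq_slash (γ : SL(2, ℤ)) :
    ((12 : ℂ) • normalizedDerivOfComplex EisensteinSeries.E2 -
        EisensteinSeries.E2 * EisensteinSeries.E2) ∣[(4 : ℤ)] γ =
      (12 : ℂ) • normalizedDerivOfComplex EisensteinSeries.E2 -
        EisensteinSeries.E2 * EisensteinSeries.E2 := by
  have in_terms_of_serre : (12 : ℂ) • normalizedDerivOfComplex EisensteinSeries.E2 -
      EisensteinSeries.E2 * EisensteinSeries.E2 =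
      (12 : ℂ) • serreDerivative ((2 : ℤ) : ℂ) EisensteinSeries.E2 +
        EisensteinSeries.E2 * EisensteinSeries.E2 := by
    ext z
    simp only [Pi.add_apply, Pi.sub_apply, Pi.mul_apply, Pi.smul_apply, smul_eq_mul,
      serreDerivative_apply]
    push_cast
    ring
  have serre_slash : serreDerivative ((2 : ℤ) : ℂ) EisensteinSeries.E2 ∣[(4 : ℤ)] γ = _ :=
    serreDerivative_slash_equivariant (k := 2) E2_mdifferentiable
  have sq_slash : (EisensteinSeries.E2 * EisensteinSeries.E2) ∣[(4 : ℤ)] γ = _ :=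
    ModularForm.mul_slash_SL2 2 2 γ EisensteinSeries.E2 EisensteinSeries.E2
  rw [in_terms_of_serre, SlashAction.add_slash, ModularForm.SL_smul_slash, serre_slash, sq_slash,
    EisensteinSeries.E2_slash_action,
    serreDerivative_sub _ _ _ E2_mdifferentiable ((mdifferentiable_D2 γ).const_smul _),
    serreDerivative_smul _ _ _ (mdifferentiable_D2 γ)]
  ext z
  simp only [Pi.add_apply, Pi.sub_apply, Pi.mul_apply, Pi.smul_apply, Pi.pow_apply,
    smul_eq_mul, serreDerivative_apply, normalizedDeriv_D2]
  push_cast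
  ring

lemma HasQExpansion.int_eq_zero_of_slash_invariant {f : ℍ → ℂ} {c : ℤ⟦X⟧}
    (h : HasQExpansion f (map (Int.castRingHom ℂ) c)) {k : ℕ} (hk : k < 12)
    (slash : ∀ γ : SL(2, ℤ), f ∣[(k : ℤ)] γ = f) (hc : constantCoeff c = 0) : c = 0 := by
  have constantCoeff_map : constantCoeff (map (Int.castRingHom ℂ) c) = 0 := by
    rw [← coeff_zero_eq_constantCoeff_apply, coeff_map, coeff_zero_eq_constantCoeff_apply, hc,
      map_zero]
  exact map_injective (Int.castRingHom ℂ) (RingHom.injective_int _) <|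
    (h.eq_zero_of_slash_invariant hk slash constantCoeff_map).trans (map_zero _).symm

lemma ramanujan_eisP : 12 * qDeriv eisP = eisP * eisP - eisQ := by
  have hasQExpansion : HasQExpansion
      ((12 : ℂ) • normalizedDerivOfComplex EisensteinSeries.E2 -
        EisensteinSeries.E2 * EisensteinSeries.E2 + E₄)
      (map (Int.castRingHom ℂ) (12 * qDeriv eisP - eisP * eisP + eisQ)) := by
    simpa [map_qDeriv, smul_eq_C_mul, map_ofNat] using
      ((hasQExpansion_E2.normalizedDeriv.smul 12).sub
        (hasQExpansion_E2.mul hasQExpansion_E2)).add hasQExpansion_E4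
  have slash (γ : SL(2, ℤ)) := (SlashAction.add_slash (4 : ℤ) γ _ _).trans
    (congrArg₂ (· + ·) (normalizedDeriv_E2_sub_sq_slash γ) (E4_slash γ))
  linear_combination hasQExpansion.int_eq_zero_of_slash_invariant (k := 4) (by norm_num) slash
    (by simp)

lemma ramanujan_eisQ : 3 * qDeriv eisQ = eisP * eisQ - eisR := by
  have hasQExpansion : HasQExpansion
      ((3 : ℂ) • normalizedDerivOfComplex E₄ - EisensteinSeries.E2 * E₄ + E₆)
      (map (Int.castRingHom ℂ) (3 * qDeriv eisQ - eisP * eisQ + eisR)) := by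
    simpa [map_qDeriv, smul_eq_C_mul, map_ofNat] using
      ((hasQExpansion_E4.normalizedDeriv.smul 3).sub
        (hasQExpansion_E2.mul hasQExpansion_E4)).add hasQExpansion_E6
  have serre : (3 : ℂ) • normalizedDerivOfComplex E₄ - EisensteinSeries.E2 * E₄ =
      (3 : ℂ) • serreDerivative ((4 : ℤ) : ℂ) E₄ := by
    ext z
    simp only [Pi.sub_apply, Pi.mul_apply, Pi.smul_apply, smul_eq_mul, serreDerivative_apply]
    push_cast
    ring
  have slash (γ : SL(2, ℤ)) := (SlashAction.add_slash (6 : ℤ) γ _ _).trans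
    (congrArg₂ (· + ·) ((ModularForm.SL_smul_slash 6 γ _ 3).trans (congrArg ((3 : ℂ) • ·)
      (serreDerivative_slash_invariant (k := 4) E₄.holo' (E4_slash γ)))) (E6_slash γ))
  rw [serre] at hasQExpansion
  linear_combination hasQExpansion.int_eq_zero_of_slash_invariant (k := 6) (by norm_num) slash
    (by simp)

lemma ramanujan_eisR : 2 * qDeriv eisR = eisP * eisR - eisQ * eisQ := by
  have hasQExpansion : HasQExpansion
      ((2 : ℂ) • normalizedDerivOfComplex E₆ - EisensteinSeries.E2 * E₆ + (E₄ : ℍ → ℂ) * E₄)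
      (map (Int.castRingHom ℂ) (2 * qDeriv eisR - eisP * eisR + eisQ * eisQ)) := by
    simpa [map_qDeriv, smul_eq_C_mul, map_ofNat] using
      ((hasQExpansion_E6.normalizedDeriv.smul 2).sub
        (hasQExpansion_E2.mul hasQExpansion_E6)).add (hasQExpansion_E4.mul hasQExpansion_E4)
  have serre : (2 : ℂ) • normalizedDerivOfComplex E₆ - EisensteinSeries.E2 * E₆ =
      (2 : ℂ) • serreDerivative ((6 : ℤ) : ℂ) E₆ := by
    ext z
    simp only [Pi.sub_apply, Pi.mul_apply, Pi.smul_apply, smul_eq_mul, serreDerivative_apply]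
    push_cast
    ring
  have E4_sq_slash (γ : SL(2, ℤ)) :=
    (ModularForm.mul_slash_SL2 4 4 γ E₄ E₄).trans (congrArg₂ (· * ·) (E4_slash γ) (E4_slash γ))
  have slash (γ : SL(2, ℤ)) := (SlashAction.add_slash (8 : ℤ) γ _ _).trans
    (congrArg₂ (· + ·) ((ModularForm.SL_smul_slash 8 γ _ 2).trans (congrArg ((2 : ℂ) • ·)
      (serreDerivative_slash_invariant (k := 6) E₆.holo' (E6_slash γ)))) (E4_sq_slash γ))
  rw [serre] at hasQExpansion
  linear_combination hasQExpansion.int_eq_zero_of_slash_invariant (k := 8) (by norm_num) slash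
    (by simp)

end QExpansion

/-! ### Eisenstein series of level two -/

instance {R : Type*} [CommRing R] [CharZero R] : CharZero R⟦X⟧ :=
  charZero_of_injective_ringHom (f := (C : R →+* R⟦X⟧)) C_injective

lemma qDeriv_expand {R : Type*} [CommRing R] (p : ℕ) (hp : p ≠ 0) (f : R⟦X⟧) :
    qDeriv (expand p hp f) = p * expand p hp (qDeriv f) := by
  ext n
  rw [← map_natCast C p, coeff_C_mul, coeff_qDeriv, coeff_expand, coeff_expand]
  split_ifs with h
  · obtain ⟨k, rfl⟩ := h
    rw [Nat.mul_div_cancel_left _ (Nat.pos_of_ne_zero hp), coeff_qDeriv]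
    push_cast
    ring
  · simp

lemma coeff_mul_of_coeff_eq_zero {R : Type*} [CommRing R] (f : R⟦X⟧) {g : R⟦X⟧} {n : ℕ}
    (hg : ∀ m < n, coeff m g = 0) : coeff n (f * g) = constantCoeff f * coeff n g := by
  rw [coeff_mul, Finset.sum_eq_single (0, n), coeff_zero_eq_constantCoeff_apply]
  · rintro ⟨i, j⟩ mem ne
    obtain rfl | i_pos := Nat.eq_zero_or_pos i
    · simp_all
    · rw [hg j (by grind [Finset.HasAntidiagonal.mem_antidiagonal]), mul_zero]
  · simp

/-- Frobenius' method at the regular singular point `q = 0`: the `n`-th coefficient of a solution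
is determined by the lower ones unless `n` is a root of the indicial polynomial. -/
lemma eq_zero_of_qDeriv_eq_mulVec {R ι : Type*} [CommRing R] [NoZeroDivisors R] [Fintype ι]
    [DecidableEq ι] (N : R) (M : Matrix ι ι R⟦X⟧) (v : ι → R⟦X⟧)
    (system : ∀ i, C N * qDeriv (v i) = M.mulVec v i)
    (indicial : ∀ n : ℕ,
      (Matrix.diagonal (fun _ => N * n) - M.map constantCoeff).det = 0 → ∀ i, coeff n (v i) = 0) :
    v = 0 := by
  suffices coeff_eq_zero : ∀ n i, coeff n (v i) = 0 from
    funext fun i => PowerSeries.ext fun n => by simpa using coeff_eq_zero n i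
  intro n
  induction n using Nat.strong_induction_on with
  | _ n ih =>
    by_cases det_eq_zero : (Matrix.diagonal (fun _ => N * n) - M.map constantCoeff).det = 0
    · exact indicial n det_eq_zero
    · refine congrFun (Matrix.eq_zero_of_mulVec_eq_zero det_eq_zero
        (v := fun i => coeff n (v i)) ?_)
      ext i
      have coeff_system := congrArg (coeff n) (system i)
      simp only [coeff_C_mul, coeff_qDeriv, Matrix.mulVec, dotProduct, map_sum,
        fun j => coeff_mul_of_coeff_eq_zero (M i j) fun m hm => ih m hm j] at coeff_system
      rw [Matrix.sub_mulVec, Pi.sub_apply, Matrix.mulVec_diagonal, mul_assoc, coeff_system]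
      exact sub_self _

local notation "V₂" => expand 2 two_ne_zero

/-- The weight-two Eisenstein series `2 P(q²) - P(q)` of level two. -/
def eisA : ℤ⟦X⟧ := 2 * V₂ eisP - eisP

/-- The weight-four form `(Q(q) - Q(q²)) / 240` of level two, see `eisQ_sub_expand`. -/
def eisD : ℤ⟦X⟧ := sigmaSeries 3 - V₂ (sigmaSeries 3)

@[simp]
lemma constantCoeff_eisA : constantCoeff eisA = 1 := by
  simp [eisA, map_ofNat]

lemma eisQ_sub_expand : eisQ - V₂ eisQ = 240 * eisD := by
  simp only [eisQ, eisD, map_add, map_one, map_mul, map_ofNat]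
  ring

lemma ramanujan_expand_eisP : 6 * qDeriv (V₂ eisP) = V₂ eisP * V₂ eisP - V₂ eisQ := by
  have := congrArg V₂ ramanujan_eisP
  simp only [map_sub, map_mul, map_ofNat] at this
  rw [qDeriv_expand]
  push_cast
  linear_combination this

lemma ramanujan_expand_eisQ : 3 * qDeriv (V₂ eisQ) = 2 * (V₂ eisP * V₂ eisQ - V₂ eisR) := by
  have := congrArg V₂ ramanujan_eisQ
  simp only [map_sub, map_mul, map_ofNat] at this
  rw [qDeriv_expand]
  push_cast
  linear_combination 2 * this

lemma ramanujan_expand_eisR : qDeriv (V₂ eisR) = V₂ eisP * V₂ eisR - V₂ eisQ * V₂ eisQ := by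
  have := congrArg V₂ ramanujan_eisR
  simp only [map_sub, map_mul, map_ofNat] at this
  rw [qDeriv_expand]
  push_cast
  linear_combination this

lemma qDeriv_eisA_eq : qDeriv eisA = 2 * qDeriv (V₂ eisP) - qDeriv eisP := by
  simp [eisA]

/-- The three level-two relations to be proved, as series whose vanishing is asserted by
`levelTwoDefect_eq_zero`. -/
def levelTwoDefect : Fin 3 → ℤ⟦X⟧ :=
  ![eisQ + 4 * V₂ eisQ - 5 * eisA ^ 2,
    5 * eisR - 5 * eisA ^ 3 + 12 * eisA * (eisQ - V₂ eisQ),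
    10 * V₂ eisR - 10 * eisA ^ 3 + 3 * eisA * (eisQ - V₂ eisQ)]

/-- The matrix of the differential system satisfied by `levelTwoDefect`. -/
def levelTwoMatrix : Matrix (Fin 3) (Fin 3) ℤ⟦X⟧ :=
  !![2 * (10 * eisP + 23 * eisA), -4, -16;
    3 * (-28 * (eisQ - V₂ eisQ) - 21 * eisA ^ 2 - 2 * levelTwoDefect 0),
      3 * (10 * eisP - 16 * eisA), 48 * eisA;
    3 * (13 * (eisQ - V₂ eisQ) - 54 * eisA ^ 2 - 8 * levelTwoDefect 0),
      -12 * eisA, 3 * (10 * eisP + 14 * eisA)]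

lemma qDeriv_levelTwoDefect (i : Fin 3) :
    C 60 * qDeriv (levelTwoDefect i) = levelTwoMatrix.mulVec levelTwoDefect i := by
  fin_cases i <;>
    simp only [levelTwoMatrix, levelTwoDefect, map_ofNat, Matrix.mulVec, dotProduct,
      Fin.sum_univ_three, Matrix.of_apply, Matrix.cons_val, Fin.zero_eta, Fin.mk_one,
      Fin.reduceFinMk, map_add, map_sub, qDeriv_mul, qDeriv_ofNat, pow_succ, pow_zero, one_mul,
      qDeriv_eisA_eq] <;>
    simp only [eisA]
  · linear_combination (20 : ℤ⟦X⟧) * ramanujan_eisQ + 80 * ramanujan_expand_eisQ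
      - 200 * (2 * V₂ eisP - eisP) * ramanujan_expand_eisP
      + 50 * (2 * V₂ eisP - eisP) * ramanujan_eisP
  · linear_combination (150 : ℤ⟦X⟧) * ramanujan_eisR
      + 3 * (80 * (eisQ - V₂ eisQ) - 100 * (2 * V₂ eisP - eisP) ^ 2) * ramanujan_expand_eisP
      + 3 * (25 * (2 * V₂ eisP - eisP) ^ 2 - 20 * (eisQ - V₂ eisQ)) * ramanujan_eisP
      + 240 * (2 * V₂ eisP - eisP) * (ramanujan_eisQ - ramanujan_expand_eisQ)
  · linear_combination (600 : ℤ⟦X⟧) * ramanujan_expand_eisR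
      + 3 * (20 * (eisQ - V₂ eisQ) - 200 * (2 * V₂ eisP - eisP) ^ 2) * ramanujan_expand_eisP
      + 3 * (50 * (2 * V₂ eisP - eisP) ^ 2 - 5 * (eisQ - V₂ eisQ)) * ramanujan_eisP
      + 60 * (2 * V₂ eisP - eisP) * (ramanujan_eisQ - ramanujan_expand_eisQ)

lemma levelTwo_indicial (n : ℕ) :
    (Matrix.diagonal (fun _ => (60 : ℤ) * n) - levelTwoMatrix.map constantCoeff).det =
      (216000 * (n ^ 2 * (n - 2)) : ℤ) := by
  simp [levelTwoMatrix, levelTwoDefect, Matrix.det_fin_three, map_ofNat]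
  ring

lemma coeff_two_mul {R : Type*} [CommRing R] (f g : R⟦X⟧) :
    coeff 2 (f * g) =
      constantCoeff f * coeff 2 g + coeff 1 f * coeff 1 g + coeff 2 f * constantCoeff g := by
  simp [coeff_mul, Finset.Nat.antidiagonal_succ, add_assoc]

lemma coeff_levelTwoDefect_eq_zero {n : ℕ} (hn : n = 0 ∨ n = 2) (i : Fin 3) :
    coeff n (levelTwoDefect i) = 0 := by
  have sigma_two : sigma 1 2 = 3 ∧ sigma 3 2 = 9 ∧ sigma 5 2 = 33 := by decide
  have coeff_one_eisA : coeff 1 eisA = 24 := by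
    simp [eisA, coeff_ofNat_mul, coeff_expand, coeff_eisP]
  have coeff_two_eisA : coeff 2 eisA = 24 := by
    simp [eisA, coeff_ofNat_mul, coeff_expand, coeff_eisP, sigma_two]
  obtain rfl | rfl := hn <;> fin_cases i <;>
  simp [levelTwoDefect, mul_assoc, coeff_ofNat_mul, pow_succ, coeff_two_mul, coeff_one_mul,
    coeff_eisQ, coeff_eisR, coeff_expand, sigma_two, coeff_one_eisA, coeff_two_eisA, map_ofNat]

lemma levelTwoDefect_eq_zero : levelTwoDefect = 0 := by
  refine eq_zero_of_qDeriv_eq_mulVec 60 levelTwoMatrix _ qDeriv_levelTwoDefect fun n det_eq_zero =>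
    coeff_levelTwoDefect_eq_zero ?_
  rw [levelTwo_indicial] at det_eq_zero
  have : (n : ℤ) = 0 ∨ (n : ℤ) = 2 := by simpa [sub_eq_zero] using det_eq_zero
  exact_mod_cast this

lemma eisQ_eq : eisQ = eisA ^ 2 + 192 * eisD :=
  mul_left_cancel₀ (OfNat.ofNat_ne_zero 5) <| by
    have : eisQ + 4 * V₂ eisQ - 5 * eisA ^ 2 = 0 := congrFun levelTwoDefect_eq_zero 0
    linear_combination this + 4 * eisQ_sub_expand

lemma expand_eisQ_eq : V₂ eisQ = eisA ^ 2 - 48 * eisD := by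
  linear_combination eisQ_eq - eisQ_sub_expand

lemma eisR_eq : eisR = eisA ^ 3 - 576 * eisA * eisD :=
  mul_left_cancel₀ (OfNat.ofNat_ne_zero 5) <| by
    have : 5 * eisR - 5 * eisA ^ 3 + 12 * eisA * (eisQ - V₂ eisQ) = 0 :=
      congrFun levelTwoDefect_eq_zero 1
    linear_combination this - 12 * eisA * eisQ_sub_expand

lemma expand_eisR_eq : V₂ eisR = eisA ^ 3 - 72 * eisA * eisD :=
  mul_left_cancel₀ (OfNat.ofNat_ne_zero 10) <| by
    have : 10 * V₂ eisR - 10 * eisA ^ 3 + 3 * eisA * (eisQ - V₂ eisQ) = 0 :=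
      congrFun levelTwoDefect_eq_zero 2
    linear_combination this - 3 * eisA * eisQ_sub_expand

lemma qDeriv_eisP : 12 * qDeriv eisP = eisP ^ 2 - eisA ^ 2 - 192 * eisD := by
  linear_combination ramanujan_eisP - eisQ_eq

lemma two_mul_expand_eisP : 2 * V₂ eisP = eisP + eisA := by
  rw [eisA]
  ring

lemma qDeriv_eisA : 6 * qDeriv eisA = eisA * (eisP - eisA) + 192 * eisD :=
  mul_left_cancel₀ (two_ne_zero) <| by
    linear_combination 12 * qDeriv_eisA_eq + 4 * ramanujan_expand_eisP - ramanujan_eisP +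
      (2 * V₂ eisP + eisP + eisA) * two_mul_expand_eisP + eisQ_eq - 4 * expand_eisQ_eq

lemma qDeriv_eisD : 3 * qDeriv eisD = eisD * (eisP + 2 * eisA) := by
  have qDeriv_eisQ_sub := congrArg qDeriv eisQ_sub_expand
  rw [map_sub, qDeriv_mul, qDeriv_ofNat] at qDeriv_eisQ_sub
  refine mul_left_cancel₀ (OfNat.ofNat_ne_zero 240) ?_
  linear_combination -3 * qDeriv_eisQ_sub + ramanujan_eisQ - ramanujan_expand_eisQ +
    eisP * eisQ_eq - eisR_eq + 2 * expand_eisR_eq - 2 * V₂ eisP * expand_eisQ_eq -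
    (eisA ^ 2 - 48 * eisD) * two_mul_expand_eisP

lemma eisA_mul_eisD : eisA * eisD = sigmaSeries 5 - V₂ (sigmaSeries 5) :=
  mul_left_cancel₀ (OfNat.ofNat_ne_zero 504) <| by
    have eisR_sub : eisR - V₂ eisR = -504 * (sigmaSeries 5 - V₂ (sigmaSeries 5)) := by
      simp only [eisR, map_sub, map_one, map_mul, map_ofNat]
      ring
    linear_combination eisR_eq - expand_eisR_eq - eisR_sub

/-! ### The products `J b` -/

section Products

variable {R : Type*} [CommRing R]

lemma ofNat_dvd_iff (k : ℕ) [k.AtLeastTwo] (f : R⟦X⟧) :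
    ofNat(k) ∣ f ↔ ∀ n, (ofNat(k) : R) ∣ coeff n f := by
  constructor
  · rintro ⟨g, rfl⟩ n
    exact ⟨coeff n g, coeff_ofNat_mul k g n⟩
  · intro h
    choose g hg using h
    exact ⟨mk g, PowerSeries.ext fun n => by rw [coeff_ofNat_mul, coeff_mk, hg n]⟩

lemma eq_of_forall_X_pow_dvd_sub {f g : R⟦X⟧} (h : ∀ N, X ^ N ∣ f - g) : f = g := by
  ext n
  have := X_pow_dvd_iff.mp (h (n + 1)) n n.lt_succ_self
  rwa [map_sub, sub_eq_zero] at this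

lemma ofNat_dvd_of_forall_X_pow_dvd_sub (k : ℕ) [k.AtLeastTwo] {f : R⟦X⟧}
    (h : ∀ N, ∃ g, ofNat(k) ∣ g ∧ X ^ N ∣ f - g) : ofNat(k) ∣ f := by
  rw [ofNat_dvd_iff]
  intro n
  obtain ⟨g, dvd_g, close⟩ := h (n + 1)
  have coeff_eq := X_pow_dvd_iff.mp close n n.lt_succ_self
  rw [map_sub, sub_eq_zero] at coeff_eq
  exact coeff_eq ▸ (ofNat_dvd_iff k g).mp dvd_g n

lemma X_pow_dvd_qDeriv {f : R⟦X⟧} {N : ℕ} (h : X ^ N ∣ f) : X ^ N ∣ qDeriv f := by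
  rw [X_pow_dvd_iff] at h ⊢
  intro m hm
  rw [coeff_qDeriv, h m hm, mul_zero]

/-- The truncation `∏_{k=1}^N (1 - q ^ (b k))` of the product `J b`. -/
def partialJ (b N : ℕ) : ℤ⟦X⟧ := ∏ k ∈ Finset.range N, (1 - X ^ (b * (k + 1)))

lemma partialJ_succ (b N : ℕ) :
    partialJ b (N + 1) = partialJ b N * (1 - X ^ (b * (N + 1))) :=
  Finset.prod_range_succ _ N

lemma coeff_partialJ_add {b : ℕ} (hb : b ≠ 0) (n m : ℕ) :
    coeff n (partialJ b (n + 1 + m)) = coeff n (partialJ b (n + 1)) := by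
  induction m with
  | zero => rfl
  | succ m ih =>
    have : n < b * (n + 1 + m + 1) := by nlinarith [Nat.pos_of_ne_zero hb]
    rw [← add_assoc, partialJ_succ, mul_sub, mul_one, map_sub, ih, coeff_mul_X_pow',
      if_neg this.not_ge, sub_zero]

lemma X_pow_dvd_J_sub_partialJ {b : ℕ} (hb : b ≠ 0) (N : ℕ) : X ^ N ∣ J b - partialJ b N := by
  rw [X_pow_dvd_iff]
  intro n hn
  obtain ⟨m, rfl⟩ := Nat.exists_eq_add_of_le (Nat.succ_le_of_lt hn)
  rw [map_sub, coeff_partialJ_add hb, J, coeff_mk]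
  exact sub_self _

lemma expand_partialJ {b : ℕ} (hb : b ≠ 0) (N : ℕ) :
    expand b hb (partialJ 1 N) = partialJ b N := by
  simp [partialJ, map_prod, expand_X, ← pow_mul]

lemma expand_J_one {b : ℕ} (hb : b ≠ 0) : expand b hb (J 1) = J b :=
  eq_of_forall_X_pow_dvd_sub fun N => by
    have expanded : (X : ℤ⟦X⟧) ^ N ∣ expand b hb (J 1 - partialJ 1 N) := by
      refine (pow_dvd_pow_of_dvd (dvd_pow_self X hb) N).trans ?_
      simpa [expand_X] using map_dvd (expand b hb) (X_pow_dvd_J_sub_partialJ one_ne_zero N)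
    convert expanded.sub (X_pow_dvd_J_sub_partialJ hb N) using 1
    rw [map_sub, expand_partialJ]
    ring

lemma expand_J {m b : ℕ} (hm : m ≠ 0) (hb : b ≠ 0) : expand m hm (J b) = J (m * b) := by
  rw [← expand_J_one hb, ← expand_mul, expand_J_one]

@[simp]
lemma constantCoeff_J_one : constantCoeff (J 1) = 1 := by
  rw [← coeff_zero_eq_constantCoeff_apply]
  simp [J]

lemma constantCoeff_J {b : ℕ} (hb : b ≠ 0) : constantCoeff (J b) = 1 := by
  rw [← expand_J_one hb, constantCoeff_expand, constantCoeff_J_one]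

lemma isUnit_J {b : ℕ} (hb : b ≠ 0) : IsUnit (J b) := by
  rw [isUnit_iff_constantCoeff, constantCoeff_J hb]
  exact isUnit_one

lemma J_ne_zero {b : ℕ} (hb : b ≠ 0) : J b ≠ 0 := (isUnit_J hb).ne_zero

lemma X_pow_dvd_convolution_sub (f g : ArithmeticFunction ℕ) (N : ℕ) :
    (X : ℤ⟦X⟧) ^ N ∣ (mk fun n => ((f * g) n : ℤ)) - ∑ k ∈ Finset.range N,
      (f (k + 1) : ℤ⟦X⟧) * expand (k + 1) k.succ_ne_zero (mk fun n => (g n : ℤ)) := by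
  rw [X_pow_dvd_iff]
  intro m hm
  obtain rfl | m_pos := Nat.eq_zero_or_pos m
  · simp
  rw [map_sub, coeff_mk, sub_eq_zero, map_sum, ArithmeticFunction.mul_apply,
    Nat.sum_divisorsAntidiagonal (fun a b => f a * g b)]
  have divisors_eq : m.divisors = {k ∈ Finset.range N | k + 1 ∣ m}.image (· + 1) := by
    ext d
    simp only [Nat.mem_divisors, Finset.mem_image, Finset.mem_filter, Finset.mem_range]
    refine ⟨fun ⟨dvd, _⟩ => ⟨d - 1, ?_⟩, by rintro ⟨k, ⟨-, dvd⟩, rfl⟩; exact ⟨dvd, m_pos.ne'⟩⟩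
    have := Nat.le_of_dvd m_pos dvd
    have := Nat.pos_of_dvd_of_pos dvd m_pos
    simpa [Nat.sub_add_cancel this, dvd] using by lia
  rw [divisors_eq, Finset.sum_image (by simp), Finset.sum_filter]
  push_cast
  refine Finset.sum_congr rfl fun k _ => ?_
  rw [← map_natCast C (f (k + 1)), coeff_C_mul, coeff_expand, coeff_mk, mul_ite, mul_zero]

/-- The series `∑ n ^ k q ^ n` over `n ≥ 1`. -/
def powSeries (k : ℕ) : ℤ⟦X⟧ := mk fun n => (ArithmeticFunction.pow k n : ℤ)

lemma X_pow_dvd_sigmaSeries_sub (k N : ℕ) :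
    X ^ N ∣ sigmaSeries k - ∑ j ∈ Finset.range N,
      expand (j + 1) j.succ_ne_zero (powSeries k) := by
  simpa [sigmaSeries, powSeries, ArithmeticFunction.zeta_mul_pow_eq_sigma] using
    X_pow_dvd_convolution_sub ArithmeticFunction.zeta (ArithmeticFunction.pow k) N

lemma X_pow_dvd_sigmaSeries_one_sub (N : ℕ) :
    X ^ N ∣ sigmaSeries 1 - ∑ j ∈ Finset.range N, ((j + 1 : ℕ) : ℤ⟦X⟧) *
      expand (j + 1) j.succ_ne_zero (powSeries 0) := by
  have := X_pow_dvd_convolution_sub (ArithmeticFunction.pow 1) ArithmeticFunction.zeta N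
  simpa [sigmaSeries, powSeries, mul_comm _ ArithmeticFunction.zeta,
    ArithmeticFunction.pow_zero_eq_zeta,
    ArithmeticFunction.zeta_mul_pow_eq_sigma, ArithmeticFunction.pow_apply] using this

lemma one_sub_X_mul_powSeries_zero : (1 - X) * powSeries 0 = X := by
  ext n
  rw [sub_mul, one_mul, map_sub, coeff_X]
  rcases n with _ | _ | n <;>
    simp [powSeries, ArithmeticFunction.pow_zero_eq_zeta, coeff_succ_X_mul]

lemma qDeriv_partialJ_one (N : ℕ) :
    qDeriv (partialJ 1 N) = -(partialJ 1 N * ∑ j ∈ Finset.range N, ((j + 1 : ℕ) : ℤ⟦X⟧) *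
      expand (j + 1) j.succ_ne_zero (powSeries 0)) := by
  induction N with
  | zero => simp [partialJ]
  | succ N ih =>
    have geometric := congrArg (expand (N + 1) N.succ_ne_zero) one_sub_X_mul_powSeries_zero
    rw [map_mul, map_sub, map_one, expand_X] at geometric
    rw [partialJ_succ, qDeriv_mul, ih, Finset.sum_range_succ, map_sub, Derivation.map_one_eq_zero,
      one_mul, qDeriv_pow, qDeriv_X, Nat.add_sub_cancel, mul_assoc _ (X ^ N), ← pow_succ]
    linear_combination partialJ 1 N * (N + 1 : ℕ) * geometric

lemma qDeriv_J_one : qDeriv (J 1) = -(sigmaSeries 1 * J 1) :=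
  eq_of_forall_X_pow_dvd_sub fun N => by
    have J_close := X_pow_dvd_J_sub_partialJ one_ne_zero N
    have qDeriv_close := X_pow_dvd_qDeriv J_close
    rw [map_sub, qDeriv_partialJ_one] at qDeriv_close
    convert (qDeriv_close.add (J_close.mul_left (sigmaSeries 1))).add
      ((X_pow_dvd_sigmaSeries_one_sub N).mul_left (partialJ 1 N)) using 1
    ring

lemma qDeriv_J {b : ℕ} (hb : b ≠ 0) :
    qDeriv (J b) = -(b * expand b hb (sigmaSeries 1) * J b) := by
  rw [← expand_J_one hb, qDeriv_expand, qDeriv_J_one, map_neg, map_mul]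
  ring

lemma one_sub_X_pow_seven_congr :
    (49 : ℤ⟦X⟧) ∣ (1 - X) ^ 7 -
      (1 - X ^ 7) * (1 - 7 * powSeries 5) := by
  have fifth_powers : (7 : ℤ⟦X⟧) ∣ (1 - X ^ 7) * (powSeries 5) -
      (X + 4 * X ^ 2 + 5 * X ^ 3 + 2 * X ^ 4 + 3 * X ^ 5 + 6 * X ^ 6) := by
    rw [ofNat_dvd_iff]
    intro n
    obtain hn | hn := lt_or_ge n 7
    · interval_cases n <;>
        norm_num [powSeries, sub_mul, coeff_X_pow_mul', coeff_ofNat_mul, coeff_X_pow, coeff_X]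
    · obtain ⟨m, rfl⟩ := Nat.exists_eq_add_of_le hn
      have coeff_eq : coeff (7 + m) ((1 - X ^ 7) * powSeries 5 - (X + 4 * X ^ 2 + 5 * X ^ 3 +
          2 * X ^ 4 + 3 * X ^ 5 + 6 * X ^ 6)) = (7 + m : ℤ) ^ 5 - (m : ℤ) ^ 5 := by
        simp [powSeries, sub_mul, coeff_X_pow_mul', coeff_ofNat_mul, coeff_X_pow, coeff_X,
          show ∀ i < 7, 7 + m ≠ i by lia]
      rw [coeff_eq]
      exact (by simp : (7 : ℤ) ∣ 7 + m - m).trans (sub_dvd_pow_sub_pow _ _ 5)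
  obtain ⟨g, hg⟩ := fifth_powers
  exact ⟨g + X ^ 2 + X ^ 4 + X ^ 6, by linear_combination 7 * hg⟩

lemma partialJ_one_pow_seven_congr (N : ℕ) :
    (49 : ℤ⟦X⟧) ∣ partialJ 1 N ^ 7 - partialJ 7 N * (1 - 7 * ∑ j ∈ Finset.range N,
      expand (j + 1) j.succ_ne_zero (powSeries 5)) := by
  induction N with
  | zero => simp [partialJ]
  | succ N ih =>
    have factor := map_dvd (expand (N + 1) N.succ_ne_zero) one_sub_X_pow_seven_congr
    simp only [map_sub, map_mul, map_pow, map_one, map_ofNat, expand_X, ← pow_mul] at factor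
    obtain ⟨g, hg⟩ := ih
    obtain ⟨h, hh⟩ := factor
    rw [partialJ_succ, partialJ_succ, Finset.sum_range_succ, one_mul]
    set σ := ∑ j ∈ Finset.range N, expand (j + 1) j.succ_ne_zero (powSeries 5)
    set τ := expand (N + 1) N.succ_ne_zero (powSeries 5)
    refine ⟨g * (1 - X ^ (N + 1)) ^ 7 + partialJ 7 N * (1 - 7 * σ) * h +
      partialJ 7 N * (1 - X ^ ((N + 1) * 7)) * σ * τ, ?_⟩
    linear_combination (1 - X ^ (N + 1)) ^ 7 * hg + partialJ 7 N * (1 - 7 * σ) * hh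

lemma J_one_pow_seven_congr : (49 : ℤ⟦X⟧) ∣ J 1 ^ 7 - J 7 * (1 - 7 * sigmaSeries 5) :=
  ofNat_dvd_of_forall_X_pow_dvd_sub 49 fun N => by
    refine ⟨_, partialJ_one_pow_seven_congr N, ?_⟩
    have J_one_close := X_pow_dvd_J_sub_partialJ one_ne_zero N
    have J_seven_close := X_pow_dvd_J_sub_partialJ (b := 7) (by norm_num) N
    convert ((J_one_close.trans (sub_dvd_pow_sub_pow _ _ 7)).sub
      (J_seven_close.mul_right (1 - 7 * sigmaSeries 5))).add
      ((X_pow_dvd_sigmaSeries_sub 5 N).mul_left (7 * partialJ 7 N)) using 1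
    ring

end Products

/-! ### Eta quotients of level two -/

lemma eq_zero_of_qDeriv_eq_mul {v g : ℤ⟦X⟧} (ode : qDeriv v = g * v)
    (h : ∀ n : ℕ, (n : ℤ) = constantCoeff g → coeff n v = 0) : v = 0 := by
  refine congrFun (eq_zero_of_qDeriv_eq_mulVec (ι := Unit) 1 (.of fun _ _ => g)
    (fun _ => v) ?_ ?_) ()
  · simpa [Matrix.mulVec, dotProduct] using ode
  · intro n det_eq_zero _
    exact h n (by simpa [sub_eq_zero, Matrix.map_apply] using det_eq_zero)

lemma qDeriv_J_two : qDeriv (J 2) = -(2 * V₂ (sigmaSeries 1) * J 2) :=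
  mod_cast qDeriv_J two_ne_zero

lemma eisP_eq_sigmaSeries : eisP = 1 - 24 * sigmaSeries 1 := rfl

lemma eisA_eq_sigmaSeries : eisA = 1 + 24 * sigmaSeries 1 - 48 * V₂ (sigmaSeries 1) := by
  simp only [eisA, eisP, map_sub, map_one, map_mul, map_ofNat]
  ring

lemma eisD_mul_J_one_pow : eisD * J 1 ^ 8 = X * J 2 ^ 16 := by
  rw [← sub_eq_zero]
  refine eq_zero_of_qDeriv_eq_mul (g := 1 - 32 * V₂ (sigmaSeries 1)) ?_ fun n hn => ?_
  · refine mul_left_cancel₀ (OfNat.ofNat_ne_zero 3) ?_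
    rw [map_sub, qDeriv_mul, qDeriv_mul, qDeriv_pow, qDeriv_pow, qDeriv_X, qDeriv_J_one,
      qDeriv_J_two]
    push_cast
    linear_combination
      J 1 ^ 8 * qDeriv_eisD + eisD * J 1 ^ 8 * (eisP_eq_sigmaSeries + 2 * eisA_eq_sigmaSeries)
  · obtain rfl : n = 1 := by simpa [map_ofNat] using hn
    simp [eisD, coeff_one_mul, constantCoeff_J two_ne_zero, coeff_expand]

lemma eisA_sq_sub_mul_J_two_pow : (eisA ^ 2 - 64 * eisD) * J 2 ^ 8 = J 1 ^ 16 := by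
  rw [← sub_eq_zero]
  refine eq_zero_of_qDeriv_eq_mul (g := -16 * sigmaSeries 1) ?_ fun n hn => ?_
  · refine mul_left_cancel₀ (OfNat.ofNat_ne_zero 3) ?_
    simp only [map_sub, qDeriv_mul, qDeriv_pow, qDeriv_ofNat, qDeriv_J_one, qDeriv_J_two]
    push_cast
    linear_combination J 2 ^ 8 * (eisA * qDeriv_eisA - 64 * qDeriv_eisD +
      (eisA ^ 2 - 64 * eisD) * (eisP_eq_sigmaSeries - eisA_eq_sigmaSeries))
  · obtain rfl : n = 0 := by simpa [map_ofNat] using hn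
    simp [eisD, constantCoeff_J two_ne_zero]

/-! ### Reduction modulo seven -/

local notation "V₇" => expand 7 (OfNat.ofNat_ne_zero 7)

instance : Fact (Nat.Prime 7) := ⟨by norm_num⟩

instance (m : ℕ) : CharP (ZMod m)⟦X⟧ m :=
  charP_of_injective_ringHom (f := (C : ZMod m →+* (ZMod m)⟦X⟧)) C_injective m

/-- Coefficientwise reduction modulo `m` of an integral power series. -/
def reduceMod (m : ℕ) : ℤ⟦X⟧ →+* (ZMod m)⟦X⟧ := map (Int.castRingHom (ZMod m))

local notation "j₁" => reduceMod 7 (J 1)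
local notation "j₂" => reduceMod 7 (J 2)

lemma reduceMod_eq_zero_iff (m : ℕ) [m.AtLeastTwo] {f : ℤ⟦X⟧} :
    reduceMod ofNat(m) f = 0 ↔ ofNat(m) ∣ f := by
  rw [ofNat_dvd_iff, PowerSeries.ext_iff]
  simp only [reduceMod, coeff_map, map_zero, eq_intCast, ZMod.intCast_zmod_eq_zero_iff_dvd]
  rfl

lemma reduceMod_eq_iff (m : ℕ) [m.AtLeastTwo] {f g : ℤ⟦X⟧} :
    reduceMod ofNat(m) f = reduceMod ofNat(m) g ↔ ofNat(m) ∣ f - g := by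
  rw [← sub_eq_zero, ← map_sub, reduceMod_eq_zero_iff]

lemma reduceMod_qDeriv (m : ℕ) (f : ℤ⟦X⟧) : reduceMod m (qDeriv f) = qDeriv (reduceMod m f) :=
  map_qDeriv _ f

lemma reduceMod_X (m : ℕ) : reduceMod m X = X := map_X _

lemma expand_eq_pow {p : ℕ} [Fact p.Prime] (f : (ZMod p)⟦X⟧) :
    expand p (NeZero.ne p) f = f ^ p := by
  have h := MvPowerSeries.map_frobenius_expand (R := ZMod p) p (NeZero.ne p) (σ := Unit) (f := f)
  rwa [ZMod.frobenius_zmod, MvPowerSeries.map_id] at h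

lemma reduceMod_expand {p : ℕ} [Fact p.Prime] (f : ℤ⟦X⟧) :
    reduceMod p (expand p (NeZero.ne p) f) = reduceMod p f ^ p := by
  rw [reduceMod, map_expand, expand_eq_pow]

/-- The residue modulo `7` of `eisA`. -/
def resA : (ZMod 7)⟦X⟧ := reduceMod 7 eisA

/-- The residue modulo `7` of `eisD`. -/
def resD : (ZMod 7)⟦X⟧ := reduceMod 7 eisD

/-- The residue modulo `7` of `eisP`. -/
def resP : (ZMod 7)⟦X⟧ := reduceMod 7 eisP

/-- The residue modulo `7` of `sigmaSeries 5`. -/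
def resS : (ZMod 7)⟦X⟧ := reduceMod 7 (sigmaSeries 5)

/-- The inverse of `resA`, see `resA_mul_resB`. -/
def resB : (ZMod 7)⟦X⟧ := resA ^ 2 - 2 * resD

lemma reduceMod_seven_eisR : reduceMod 7 eisR = 1 := by
  have h : reduceMod 7 eisR = 1 - 504 * resS := by
    simp only [eisR, map_sub, map_one, map_mul, map_ofNat, resS]
  grind [resS]

-- Modulo seven `eisR` is `1`, and it always factors as `eisA` times a form of weight four.
lemma resA_mul_resB : resA * resB = 1 := by
  have h := congrArg (reduceMod 7) eisR_eq
  simp only [reduceMod_seven_eisR, map_sub, map_mul, map_pow, map_ofNat] at h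
  grind [resA, resB, resD]

lemma resD_eq : resD = 4 * (resA ^ 2 - resB) := by grind [resB]

lemma resP_eq : resP = resA ^ 4 + 3 * resA + 4 * resB ^ 2 := by
  have hQ := congrArg (reduceMod 7) eisQ_eq
  have hR := congrArg (reduceMod 7) ramanujan_eisR
  simp only [reduceMod_seven_eisR, reduceMod_qDeriv, Derivation.map_one_eq_zero, map_sub,
    map_add, map_mul, map_pow, map_ofNat] at hQ hR
  grind [resA, resD, resP, resA_mul_resB, resD_eq]

lemma qDeriv_resA : qDeriv resA = resB - resA ^ 5 := by
  have h := congrArg (reduceMod 7) qDeriv_eisA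
  simp only [reduceMod_qDeriv, map_sub, map_add, map_mul, map_ofNat] at h
  grind [resA, resD, resP, resA_mul_resB, resD_eq, resP_eq]

lemma reduceMod_J_seven : reduceMod 7 (J 7) = reduceMod 7 (J 1) ^ 7 := by
  rw [← reduceMod_expand, expand_J_one]

lemma reduceMod_J_fourteen : reduceMod 7 (J 14) = reduceMod 7 (J 2) ^ 7 := by
  rw [← reduceMod_expand, expand_J _ two_ne_zero]

lemma reduceMod_J_ne_zero {m b : ℕ} [Fact (1 < m)] (hb : b ≠ 0) :
    reduceMod m (J b) ≠ 0 := fun h => by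
  have h₀ := congrArg (coeff 0) h
  simp [reduceMod, constantCoeff_J hb] at h₀

lemma qDeriv_resS : qDeriv resS = 5 * (resP ^ 7 - resP) := by
  obtain ⟨Z, hZ⟩ := J_one_pow_seven_congr
  have J_seven_ode : qDeriv (J 7) = -(7 * V₇ (sigmaSeries 1) * J 7) :=
    mod_cast qDeriv_J (OfNat.ofNat_ne_zero 7)
  have deriv_div_seven : J 7 * qDeriv (sigmaSeries 5) - sigmaSeries 1 * J 1 ^ 7 +
      V₇ (sigmaSeries 1) * J 7 * (1 - 7 * sigmaSeries 5) = 7 * qDeriv Z := by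
    have h := congrArg qDeriv hZ
    simp only [map_sub, qDeriv_mul, qDeriv_pow, qDeriv_ofNat, Derivation.map_one_eq_zero,
      qDeriv_J_one, J_seven_ode] at h
    refine mul_left_cancel₀ (OfNat.ofNat_ne_zero 7) ?_
    push_cast at h
    linear_combination h
  have resP_eq_sigma : resP = 1 - 24 * reduceMod 7 (sigmaSeries 1) := by
    simp only [resP, eisP_eq_sigmaSeries, map_sub, map_one, map_mul, map_ofNat]
  have h := congrArg (reduceMod 7) deriv_div_seven
  simp only [reduceMod_qDeriv, map_sub, map_add, map_mul, map_pow, map_one, map_ofNat,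
    reduceMod_J_seven, reduceMod_expand] at h
  refine mul_left_cancel₀ (pow_ne_zero 7 (reduceMod_J_ne_zero one_ne_zero)) ?_
  have resP_pow : resP ^ 7 = 1 - 24 * reduceMod 7 (sigmaSeries 1) ^ 7 := by
    simp only [resP_eq_sigma, ← expand_eq_pow, map_sub, map_one, map_mul, map_ofNat]
  rw [resP_pow, resP_eq_sigma]
  grind [resS]

/-! ### The operator `U` -/

section AtkinOperator

variable {R : Type*} [CommRing R]

/-- The operator `U_p` on power series, which keeps the coefficients at multiples of `p`. -/
def atkinU (p : ℕ) : R⟦X⟧ →ₗ[R] R⟦X⟧ where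
  toFun f := mk fun n => coeff (p * n) f
  map_add' f g := by ext n; simp
  map_smul' r f := by ext n; simp

@[simp]
lemma coeff_atkinU (p : ℕ) (f : R⟦X⟧) (n : ℕ) : coeff n (atkinU p f) = coeff (p * n) f :=
  coeff_mk n fun n => coeff (p * n) f

lemma map_atkinU {S : Type*} [CommRing S] (φ : R →+* S) (p : ℕ) (f : R⟦X⟧) :
    map φ (atkinU p f) = atkinU p (map φ f) := by
  ext n; simp

lemma atkinU_ofNat_mul (p k : ℕ) [k.AtLeastTwo] (f : R⟦X⟧) :
    atkinU p (ofNat(k) * f) = ofNat(k) * atkinU p f := by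
  ext n
  simp only [coeff_atkinU, coeff_ofNat_mul]

lemma atkinU_qDeriv (p : ℕ) (f : R⟦X⟧) :
    atkinU p (qDeriv f) = p * qDeriv (atkinU p f) := by
  ext n
  rw [coeff_atkinU, coeff_qDeriv, ← map_natCast (C (R := R)), coeff_C_mul, coeff_qDeriv,
    coeff_atkinU]
  push_cast
  ring

lemma atkinU_expand_mul {p : ℕ} (hp : p ≠ 0) (f g : R⟦X⟧) :
    atkinU p (expand p hp f * g) = f * atkinU p g := by
  ext n
  rw [coeff_atkinU, coeff_mul, coeff_mul]
  symm
  refine Finset.sum_of_injOn (fun x => (p * x.1, p * x.2)) ?_ ?_ ?_ ?_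
  · rintro ⟨a, b⟩ - ⟨c, d⟩ - h
    simpa [hp] using h
  · rintro ⟨a, b⟩ h
    simp only [Finset.mem_coe, Finset.HasAntidiagonal.mem_antidiagonal] at h ⊢
    rw [← mul_add, h]
  · rintro ⟨a, b⟩ hab notMem
    rw [Finset.HasAntidiagonal.mem_antidiagonal] at hab
    rw [coeff_expand_of_not_dvd, zero_mul]
    rintro ⟨k, rfl⟩
    obtain ⟨l, rfl⟩ : p ∣ b := (Nat.dvd_add_right (dvd_mul_right p k)).mp ⟨n, hab⟩
    refine notMem ⟨(k, l), ?_, rfl⟩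
    rw [← mul_add] at hab
    simpa using Nat.eq_of_mul_eq_mul_left (Nat.pos_of_ne_zero hp) hab
  · rintro ⟨a, b⟩ -
    rw [coeff_expand_mul, coeff_atkinU]

lemma atkinU_one {p : ℕ} (hp : p ≠ 0) : atkinU p (1 : R⟦X⟧) = 1 := by
  ext n
  simp [coeff_one, hp]

lemma atkinU_congr (p : ℕ) {k : ℕ} [k.AtLeastTwo] {f g : R⟦X⟧} (h : ofNat(k) ∣ f - g) :
    ofNat(k) ∣ atkinU p f - atkinU p g := by
  obtain ⟨Z, hZ⟩ := h
  exact ⟨atkinU p Z, by rw [← map_sub, hZ, atkinU_ofNat_mul]⟩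

end AtkinOperator

/-! ### The operator `U` on residues modulo seven -/

lemma atkinU_qDeriv_eq_zero {p : ℕ} (f : (ZMod p)⟦X⟧) : atkinU p (qDeriv f) = 0 := by
  rw [atkinU_qDeriv, CharP.cast_eq_zero, zero_mul]

lemma atkinU_mul_qDeriv {p : ℕ} (f g : (ZMod p)⟦X⟧) :
    atkinU p (f * qDeriv g) = -atkinU p (g * qDeriv f) := by
  rw [eq_neg_iff_add_eq_zero, ← map_add, ← qDeriv_mul, atkinU_qDeriv_eq_zero]

lemma atkinU_pow_self_mul {p : ℕ} [Fact p.Prime] (f g : (ZMod p)⟦X⟧) :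
    atkinU p (f ^ p * g) = f * atkinU p g := by
  rw [← expand_eq_pow, atkinU_expand_mul]

local notation "U₇" => atkinU 7

lemma atkinU_resA_pow_add_seven (k : ℕ) : U₇ (resA ^ (k + 7)) = resA * U₇ (resA ^ k) := by
  rw [pow_add, mul_comm, atkinU_pow_self_mul]

lemma qDeriv_resA_pow (k : ℕ) :
    qDeriv (resA ^ (k + 2)) = (k + 2 : ℕ) * (resA ^ k - resA ^ (k + 6)) := by
  have h : resA ^ (k + 1) * (resB - resA ^ 5) = resA ^ k - resA ^ (k + 6) := by
    linear_combination resA ^ k * resA_mul_resB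
  rw [qDeriv_pow, qDeriv_resA, Nat.add_succ_sub_one, mul_assoc, h]

-- Since `qDeriv (resA ^ (k + 2))` is killed, the exponents `k` and `k + 6` are equivalent.
lemma atkinU_resA_pow_add_six {k : ℕ} (hk : ¬ 7 ∣ k + 2) :
    U₇ (resA ^ (k + 6)) = U₇ (resA ^ k) := by
  have h := atkinU_qDeriv_eq_zero (resA ^ (k + 2))
  rw [qDeriv_resA_pow, ← nsmul_eq_mul, map_nsmul, nsmul_eq_mul, mul_eq_zero, map_sub,
    CharP.cast_eq_zero_iff (ZMod 7)⟦X⟧ 7, sub_eq_zero] at h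
  exact (h.resolve_left hk).symm

lemma atkinU_resA_pow {k : ℕ} (hk : k ≤ 4) : U₇ (resA ^ k) = resA ^ k := by
  have shift : ∀ i ≤ k, U₇ (resA ^ (k + 6 * i)) = U₇ (resA ^ k) := fun i => by
    induction i with
    | zero => simp
    | succ i ih =>
      intro hi
      rw [mul_add_one, ← add_assoc, atkinU_resA_pow_add_six (by omega), ih (by omega)]
  rw [← shift k le_rfl, show k + 6 * k = k * 7 by ring, pow_mul, ← mul_one ((resA ^ k) ^ 7),
    atkinU_pow_self_mul, atkinU_one (NeZero.ne 7), mul_one]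

lemma atkinU_resA_pow_six : U₇ (resA ^ 6) = 1 := by
  simpa [atkinU_one (NeZero.ne 7)] using atkinU_resA_pow_add_six (k := 0) (by norm_num)

lemma atkinU_resA_pow_five : U₇ (resA ^ 5) = resB := by
  have h := atkinU_qDeriv_eq_zero resA
  have resB_eq : resB = resB ^ 7 * resA ^ 6 := by grind [resA_mul_resB]
  rw [qDeriv_resA, map_sub, sub_eq_zero, resB_eq, atkinU_pow_self_mul, atkinU_resA_pow_six,
    mul_one] at h
  exact h.symm

/-! ### Images of eta quotients modulo seven -/

/-- The residue modulo `7` of the eta quotient `J 1 ^ 16 / J 2 ^ 8`. -/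
def resC : (ZMod 7)⟦X⟧ := resA ^ 2 - resD

lemma resC_mul_J_two_pow : resC * j₂ ^ 8 = j₁ ^ 16 := by
  have h := congrArg (reduceMod 7) eisA_sq_sub_mul_J_two_pow
  simp only [map_mul, map_sub, map_pow, map_ofNat] at h
  grind [resA, resC, resD]

lemma resD_mul_J_one_pow : resD * j₁ ^ 8 = X * j₂ ^ 16 := by
  simpa only [map_mul, map_pow, reduceMod_X, resD] using congrArg (reduceMod 7) eisD_mul_J_one_pow

lemma resC_mul_resD : resC * resD = X * j₁ ^ 8 * j₂ ^ 8 := by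
  refine mul_right_cancel₀ (mul_ne_zero (pow_ne_zero 8 (reduceMod_J_ne_zero one_ne_zero))
    (pow_ne_zero 8 (reduceMod_J_ne_zero two_ne_zero))) ?_
  linear_combination resD * j₁ ^ 8 * resC_mul_J_two_pow + j₁ ^ 16 * resD_mul_J_one_pow

/-- The residue modulo `7` of the Hauptmodul `t = q J₇⁴ / J₁⁴`. -/
def resT : (ZMod 7)⟦X⟧ := X * j₁ ^ 24

lemma resT_eq_resC_sq_mul_resD : resT = resC ^ 2 * resD := by
  refine mul_right_cancel₀ (pow_ne_zero 8 (reduceMod_J_ne_zero two_ne_zero)) ?_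
  rw [resT]
  linear_combination -resC * j₂ ^ 8 * resC_mul_resD - X * j₁ ^ 8 * j₂ ^ 8 * resC_mul_J_two_pow

lemma resA_mul_resC : resA * resC = 4 * (resA ^ 3 + 1) := by
  grind [resC, resD_eq, resA_mul_resB]

lemma resA_mul_resD : resA * resD = 4 * (resA ^ 3 - 1) := by
  grind [resD_eq, resA_mul_resB]

lemma resA_pow_mul_resT : resA ^ 3 * resT = (resA ^ 3 + 1) ^ 2 * (resA ^ 3 - 1) := by
  rw [resT_eq_resC_sq_mul_resD]
  have h : resA ^ 3 * (resC ^ 2 * resD) = (resA * resC) ^ 2 * (resA * resD) := by ring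
  rw [h, resA_mul_resC, resA_mul_resD]
  grind

lemma resA_ne_zero : resA ≠ 0 := left_ne_zero_of_mul_eq_one resA_mul_resB

lemma atkinU_resT_pow_four : U₇ (resT ^ 4) = 3 * resT := by
  have expansion : resA ^ 7 * (resA ^ 7 * resT ^ 4) = (resA ^ 3 + 1) ^ 7 * (resA ^ 17 +
      4 * resA ^ 14 + 2 * resA ^ 11 + 2 * resA ^ 8 + 4 * resA ^ 5 + resA ^ 2) := by
    calc
      _ = resA ^ 2 * (resA ^ 3 * resT) ^ 4 := by ring
      _ = resA ^ 2 * ((resA ^ 3 + 1) ^ 2 * (resA ^ 3 - 1)) ^ 4 := by rw [resA_pow_mul_resT]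
      _ = _ := by grind
  apply_fun U₇ at expansion
  simp only [atkinU_pow_self_mul, map_add, atkinU_ofNat_mul, atkinU_resA_pow_add_seven,
    atkinU_resA_pow_five, atkinU_resA_pow, Nat.reduceLeDiff] at expansion
  refine mul_left_cancel₀ (pow_ne_zero 3 resA_ne_zero) ?_
  grind [resA_pow_mul_resT, resA_mul_resB]

lemma atkinU_resD_pow_six : U₇ (resD ^ 6) = -(resA * resD) := by
  have expansion : resA ^ 7 * resD ^ 6 = resA ^ 1 + resA ^ 4 + resA ^ 7 + resA ^ 10 +
      resA ^ 13 + resA ^ 16 + resA ^ 19 := by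
    calc
      _ = resA * (resA * resD) ^ 6 := by ring
      _ = resA * (4 * (resA ^ 3 - 1)) ^ 6 := by rw [resA_mul_resD]
      _ = _ := by grind
  apply_fun U₇ at expansion
  simp only [atkinU_pow_self_mul, map_add, atkinU_resA_pow_add_seven, atkinU_resA_pow_five,
    atkinU_resA_pow_six, atkinU_resA_pow, Nat.reduceLeDiff] at expansion
  refine mul_left_cancel₀ resA_ne_zero ?_
  grind [resA_mul_resD, resA_mul_resB]

/-- The inverse of the power series `J b`, for `b ≠ 0`. -/
def invJ (b : ℕ) : ℤ⟦X⟧ := invOfUnit (J b) 1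

lemma J_mul_invJ {b : ℕ} (hb : b ≠ 0) : J b * invJ b = 1 :=
  mul_invOfUnit _ _ (by simpa using constantCoeff_J hb)

/-- The part `q ^ 12 J₂⁵ / J₁ ^ 16` of `A₅` that is not a series in `q ^ 7`. -/
def etaF : ℤ⟦X⟧ := X ^ 12 * J 2 ^ 5 * invJ 1 ^ 16

lemma etaF_mul_J_one_pow : etaF * J 1 ^ 16 = X ^ 12 * J 2 ^ 5 := by
  rw [etaF, mul_assoc, ← mul_pow, mul_comm (invJ 1), J_mul_invJ one_ne_zero, one_pow, mul_one]

/-- The residue modulo `7` of `etaF`. -/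
def resF : (ZMod 7)⟦X⟧ := reduceMod 7 etaF

lemma resF_mul_J_one_pow : resF * j₁ ^ 16 = X ^ 12 * j₂ ^ 5 := by
  simpa only [map_mul, map_pow, reduceMod_X, resF] using
    congrArg (reduceMod 7) etaF_mul_J_one_pow

lemma resD_ne_zero : resD ≠ 0 := fun h => by
  simpa [h, reduceMod_J_ne_zero, X_ne_zero] using resD_mul_J_one_pow

lemma atkinU_resF_mul_resT : U₇ (resF * resT) = -(resA * X ^ 2 * j₂ ^ 3) := by
  have is_pow_seven : resD ^ 7 * (resF * resT) = (X ^ 2 * j₂ ^ 3) ^ 7 * resD ^ 6 := by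
    rw [resT]
    linear_combination resD ^ 6 * (resD * X * j₁ ^ 8 * resF_mul_J_one_pow +
      X ^ 13 * j₂ ^ 5 * resD_mul_J_one_pow)
  apply_fun U₇ at is_pow_seven
  rw [atkinU_pow_self_mul, atkinU_pow_self_mul, atkinU_resD_pow_six] at is_pow_seven
  refine mul_left_cancel₀ resD_ne_zero ?_
  linear_combination is_pow_seven

/-! ### The third derivative of `etaF` -/

lemma qDeriv_etaF : 24 * qDeriv etaF = etaF * (5 * eisA - 11 * eisP + 294) := by
  refine mul_right_cancel₀ (pow_ne_zero 16 (J_ne_zero one_ne_zero)) ?_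
  have h := congrArg qDeriv etaF_mul_J_one_pow
  rw [qDeriv_mul, qDeriv_mul, qDeriv_pow, qDeriv_pow, qDeriv_pow, qDeriv_X, qDeriv_J_one,
    qDeriv_J_two] at h
  push_cast at h
  rw [eisA_eq_sigmaSeries, eisP_eq_sigmaSeries]
  linear_combination 24 * h - 24 * (12 - 10 * V₂ (sigmaSeries 1)) * etaF_mul_J_one_pow

/-- Up to the factor `-7`, the multiplier of `etaF` in its third derivative plus itself
modulo `49`. -/
def etaW : ℤ⟦X⟧ := eisA ^ 3 + eisA * eisD + 3 * eisP * eisA ^ 2 + 2 * eisP ^ 2 * eisA - eisP ^ 3 -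
  2 * sigmaSeries 5

-- Modulo `7` the multiplier of `etaF` on the left is `1 - eisR`, that is `504 * sigmaSeries 5`.
lemma qDeriv_qDeriv_qDeriv_etaF_congr :
    49 ∣ qDeriv (qDeriv (qDeriv etaF)) + etaF - -(7 * (etaF * etaW)) := by
  have hF := congrArg (reduceMod 49) qDeriv_etaF
  have hA := congrArg (reduceMod 49) qDeriv_eisA
  have hD := congrArg (reduceMod 49) qDeriv_eisD
  have hP := congrArg (reduceMod 49) qDeriv_eisP
  have hR := congrArg (reduceMod 49) eisR_eq
  rw [eisR] at hR
  rw [← reduceMod_eq_iff, etaW]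
  simp only [reduceMod_qDeriv, map_sub, map_add, map_neg, map_mul, map_pow, map_one, map_ofNat]
    at hF hA hD hP hR ⊢
  generalize reduceMod 49 etaF = F at *
  generalize reduceMod 49 eisA = a at *
  generalize reduceMod 49 eisD = d at *
  generalize reduceMod 49 eisP = p at *
  generalize reduceMod 49 (sigmaSeries 5) = s at *
  have h49 : (49 : (ZMod 49)⟦X⟧) = 0 := CharP.cast_eq_zero _ 49
  have hF' : qDeriv F = F * (22 * p - 10 * a) := by
    linear_combination -2 * hF + (qDeriv F - 12 * F) * h49
  have hA' : qDeriv a = -8 * (a * (p - a) - 4 * d) := by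
    linear_combination -8 * hA + (qDeriv a - 32 * d) * h49
  have hD' : qDeriv d = -16 * (d * (p + 2 * a)) := by
    linear_combination -16 * hD + qDeriv d * h49
  have hP' : qDeriv p = -4 * (p ^ 2 - a ^ 2 + 4 * d) := by
    linear_combination -4 * hP + (qDeriv p + 16 * d) * h49
  clear hF hA hD hP h49
  simp only [hF', qDeriv_mul, map_sub, map_add, map_neg, map_zero, neg_zero, qDeriv_pow,
    qDeriv_ofNat, hA', hP', hD']
  grind

lemma reduceMod_seven_etaW : reduceMod 7 etaW =
    5 * resS + (6 * resB ^ 6 + 5 + 5 * resA ^ 3 + 4 * resA ^ 6 + 6 * resA ^ 12) := by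
  simp only [etaW, map_sub, map_add, map_mul, map_pow, map_ofNat]
  grind [resA, resD, resP, resS, resA_mul_resB, resD_eq, resP_eq]

lemma resA_sq_mul_resC_mul_resD : resA ^ 2 * (resC * resD) = 2 * (resA ^ 6 - 1) := by
  have h : resA ^ 2 * (resC * resD) = resA * resC * (resA * resD) := by ring
  rw [h, resA_mul_resC, resA_mul_resD]
  grind

lemma resA_pow_mul_resC_mul_resD_pow_five : resA ^ 14 * (resC * resD) ^ 5 =
    qDeriv (5 * resA ^ 30 + 3 * resA ^ 24 + resA ^ 18 + 6 * resA ^ 12 + 4 * resA ^ 6) := by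
  have h : resA ^ 14 * (resC * resD) ^ 5 = resA ^ 4 * (resA ^ 2 * (resC * resD)) ^ 5 := by ring
  rw [h, resA_sq_mul_resC_mul_resD]
  simp only [map_add, qDeriv_mul, qDeriv_ofNat, qDeriv_pow, qDeriv_resA]
  push_cast
  grind [resA_mul_resB]

-- By parts: `resA ^ 14 * (resC * resD) ^ 5` is a derivative, and the derivative of `resS` is a
-- combination of powers of `resA` and `resP ^ 7`.
lemma resA_pow_mul_atkinU_mul_resS : resA ^ 4 * U₇ ((resC * resD) ^ 5 * resS) =
    4 * resA ^ 12 + 6 * resA ^ 9 + resA ^ 3 + 3 := by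
  have expansion : (5 * resA ^ 30 + 3 * resA ^ 24 + resA ^ 18 + 6 * resA ^ 12 + 4 * resA ^ 6) *
      qDeriv resS = resP ^ 7 * (4 * resA ^ 30 + resA ^ 24 + 5 * resA ^ 18 + 2 * resA ^ 12 +
        6 * resA ^ 6) + (3 * resA ^ 34 + 2 * resA ^ 31 + 4 * resA ^ 28 + 4 * resA ^ 25 +
        5 * resA ^ 22 + 6 * resA ^ 19 + 6 * resA ^ 16 + resA ^ 13 + 3 * resA ^ 7 +
        4 * resA ^ 4) := by
    rw [qDeriv_resS]
    generalize resP ^ 7 = P₇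
    grind [resA_mul_resB, resP_eq]
  have by_parts : resA ^ 2 * U₇ ((resC * resD) ^ 5 * resS) =
      -U₇ ((5 * resA ^ 30 + 3 * resA ^ 24 + resA ^ 18 + 6 * resA ^ 12 + 4 * resA ^ 6) *
        qDeriv resS) := by
    rw [← atkinU_pow_self_mul, ← pow_mul, ← mul_assoc, resA_pow_mul_resC_mul_resD_pow_five,
      mul_comm, atkinU_mul_qDeriv]
  rw [expansion, map_add, atkinU_pow_self_mul] at by_parts
  simp only [map_add, atkinU_ofNat_mul, atkinU_resA_pow_add_seven, atkinU_resA_pow_five,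
    atkinU_resA_pow_six, atkinU_resA_pow, Nat.reduceLeDiff, resP_eq] at by_parts
  clear expansion
  grind [resA_mul_resB]

lemma resA_pow_mul_atkinU_mul_powers : resA ^ 4 * U₇ ((resC * resD) ^ 5 *
    (6 * resB ^ 6 + 5 + 5 * resA ^ 3 + 4 * resA ^ 6 + 6 * resA ^ 12)) =
      3 * resA ^ 12 + resA ^ 9 + 6 * resA ^ 3 + 4 := by
  have expansion : (resA ^ 4) ^ 7 * ((resC * resD) ^ 5 *
      (6 * resB ^ 6 + 5 + 5 * resA ^ 3 + 4 * resA ^ 6 + 6 * resA ^ 12)) =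
      4 * resA ^ 12 + 2 * resA ^ 18 + resA ^ 21 + 5 * resA ^ 24 + 2 * resA ^ 27 + 5 * resA ^ 30 +
      3 * resA ^ 33 + 5 * resA ^ 36 + 4 * resA ^ 39 + 5 * resA ^ 42 + 5 * resA ^ 45 +
      5 * resA ^ 48 + 6 * resA ^ 51 + resA ^ 54 + 3 * resA ^ 60 := by
    calc
      _ = (resA ^ 2 * (resC * resD)) ^ 5 * (resA ^ 18 *
          (6 * resB ^ 6 + 5 + 5 * resA ^ 3 + 4 * resA ^ 6 + 6 * resA ^ 12)) := by ring
      _ = (2 * (resA ^ 6 - 1)) ^ 5 * (6 * resA ^ 12 + 5 * resA ^ 18 + 5 * resA ^ 21 +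
          4 * resA ^ 24 + 6 * resA ^ 30) := by
        rw [resA_sq_mul_resC_mul_resD]
        grind [resA_mul_resB]
      _ = _ := by grind
  apply_fun U₇ at expansion
  simp only [atkinU_pow_self_mul, map_add, atkinU_ofNat_mul, atkinU_resA_pow_add_seven,
    atkinU_resA_pow_five, atkinU_resA_pow_six, atkinU_resA_pow, Nat.reduceLeDiff] at expansion
  grind [resA_mul_resB]

lemma atkinU_resC_mul_resD_pow_five_mul_etaW :
    U₇ ((resC * resD) ^ 5 * reduceMod 7 etaW) = 4 * (resC * resD ^ 3) := by
  refine mul_left_cancel₀ (pow_ne_zero 4 resA_ne_zero) ?_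
  have target : resA ^ 4 * (resC * resD ^ 3) =
      resA ^ 2 * (resC * resD) * (resA * resD) ^ 2 := by ring
  rw [reduceMod_seven_etaW, mul_add, mul_left_comm _ 5 resS, map_add, atkinU_ofNat_mul, mul_add,
    mul_left_comm, resA_pow_mul_atkinU_mul_resS, resA_pow_mul_atkinU_mul_powers,
    mul_left_comm, target, resA_sq_mul_resC_mul_resD, resA_mul_resD]
  grind

lemma resC_ne_zero : resC ≠ 0 := fun h => by
  simpa [h, reduceMod_J_ne_zero] using resC_mul_J_two_pow.symm

lemma atkinU_resF_mul_etaW :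
    U₇ (resF * reduceMod 7 etaW) = 4 * (X ^ 2 * j₂ ^ 3 * resD ^ 2) := by
  have is_pow_seven : (resC * resD) ^ 7 * (resF * reduceMod 7 etaW) =
      (X ^ 2 * j₂ ^ 3) ^ 7 * ((resC * resD) ^ 5 * reduceMod 7 etaW) := by
    have h : resF * (resC * resD) ^ 2 = (X ^ 2 * j₂ ^ 3) ^ 7 := by
      rw [resC_mul_resD]
      linear_combination X ^ 2 * j₂ ^ 16 * resF_mul_J_one_pow
    linear_combination (resC * resD) ^ 5 * reduceMod 7 etaW * h
  apply_fun U₇ at is_pow_seven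
  rw [atkinU_pow_self_mul, atkinU_pow_self_mul, atkinU_resC_mul_resD_pow_five_mul_etaW]
    at is_pow_seven
  refine mul_left_cancel₀ (mul_ne_zero resC_ne_zero resD_ne_zero) ?_
  linear_combination is_pow_seven

lemma atkinU_etaF_mul_etaW_congr :
    7 ∣ U₇ (etaF * etaW) - 4 * (X ^ 4 * J 2 ^ 35 * invJ 1 ^ 16) := by
  have inv : j₁ * reduceMod 7 (invJ 1) = 1 := by
    rw [← map_mul, J_mul_invJ one_ne_zero, map_one]
  rw [← reduceMod_eq_iff, reduceMod, map_atkinU, ← reduceMod, map_mul, ← resF,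
    atkinU_resF_mul_etaW]
  simp only [map_mul, map_pow, map_ofNat, reduceMod_X]
  have resD_sq : resD ^ 2 = X ^ 2 * j₂ ^ 32 * reduceMod 7 (invJ 1) ^ 16 := by
    calc
      _ = (resD * j₁ ^ 8) ^ 2 * reduceMod 7 (invJ 1) ^ 16 := by
        linear_combination (norm := ring_nf) -resD ^ 2 * congrArg (· ^ 16) inv
      _ = _ := by rw [resD_mul_J_one_pow]; ring
  rw [resD_sq]
  ring

lemma atkinU_etaF_congr : 49 ∣ U₇ etaF - 21 * (X ^ 4 * J 2 ^ 35 * invJ 1 ^ 16) := by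
  obtain ⟨Y, hY⟩ := atkinU_congr 7 qDeriv_qDeriv_qDeriv_etaF_congr
  obtain ⟨Z, hZ⟩ := atkinU_etaF_mul_etaW_congr
  rw [map_add, map_neg, atkinU_ofNat_mul, atkinU_qDeriv, atkinU_qDeriv] at hY
  simp only [Nat.cast_ofNat, qDeriv_mul, qDeriv_ofNat, mul_zero, add_zero] at hY
  exact ⟨Y - qDeriv (qDeriv (U₇ (qDeriv etaF))) - Z - X ^ 4 * J 2 ^ 35 * invJ 1 ^ 16, by
    linear_combination hY - 7 * hZ⟩

/-! ### The tower -/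

local notation "ι" => HahnSeries.ofPowerSeries ℤ ℤ

lemma reduceMod_hauptmodul {t : ℤ⟦X⟧} (ht : t * J 1 ^ 4 = X * J 7 ^ 4) :
    reduceMod 7 t = resT := by
  refine mul_right_cancel₀ (pow_ne_zero 4 (reduceMod_J_ne_zero one_ne_zero)) ?_
  have h := congrArg (reduceMod 7) ht
  simp only [map_mul, map_pow, reduceMod_X, reduceMod_J_seven] at h
  rw [h, resT]
  ring

/-- The quotient `J₇ ^ 16 / J₁₄⁵`, so that `A₅` is `etaF` times `etaK` at `q ^ 7`. -/
def etaK : ℤ⟦X⟧ := J 7 ^ 16 * invJ 14 ^ 5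

lemma etaK_mul_J_fourteen_pow : etaK * J 14 ^ 5 = J 7 ^ 16 := by
  rw [etaK, mul_assoc, ← mul_pow, mul_comm (invJ 14), J_mul_invJ (OfNat.ofNat_ne_zero 14),
    one_pow, mul_one]

lemma reduceMod_etaK_mul_J_two_pow : reduceMod 7 etaK * j₂ ^ 35 = j₁ ^ 112 := by
  have h := congrArg (reduceMod 7) etaK_mul_J_fourteen_pow
  simp only [map_mul, map_pow, reduceMod_J_seven, reduceMod_J_fourteen] at h
  linear_combination h

/-- The multiplier `A₅` of the tower, as a power series. -/
def towerA : ℤ⟦X⟧ := V₇ etaK * etaF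

lemma towerA_mul_J : towerA * (J 1 ^ 16 * J 98 ^ 5) = X ^ 12 * J 2 ^ 5 * J 49 ^ 16 := by
  have h := congrArg V₇ etaK_mul_J_fourteen_pow
  simp only [map_mul, map_pow, expand_J _ (OfNat.ofNat_ne_zero 14),
    expand_J _ (OfNat.ofNat_ne_zero 7)] at h
  rw [towerA]
  linear_combination etaF * J 1 ^ 16 * h + J 49 ^ 16 * etaF_mul_J_one_pow

lemma atkinU_towerA_congr {t : ℤ⟦X⟧} (ht : t * J 1 ^ 4 = X * J 7 ^ 4) :
    49 ∣ U₇ towerA - 21 * t ^ 4 := by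
  have t_pow_congr : 7 ∣ etaK * (X ^ 4 * J 2 ^ 35 * invJ 1 ^ 16) - t ^ 4 := by
    have inv : j₁ * reduceMod 7 (invJ 1) = 1 := by
      rw [← map_mul, J_mul_invJ one_ne_zero, map_one]
    rw [← reduceMod_eq_iff, map_pow, reduceMod_hauptmodul ht, resT]
    simp only [map_mul, map_pow, reduceMod_X]
    calc
      _ = X ^ 4 * (reduceMod 7 etaK * j₂ ^ 35) * reduceMod 7 (invJ 1) ^ 16 := by ring
      _ = X ^ 4 * j₁ ^ 96 * (j₁ * reduceMod 7 (invJ 1)) ^ 16 := by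
        rw [reduceMod_etaK_mul_J_two_pow]
        ring
      _ = _ := by
        rw [inv]
        ring
  obtain ⟨Y, hY⟩ := t_pow_congr
  obtain ⟨Z, hZ⟩ := atkinU_etaF_congr
  rw [towerA, atkinU_expand_mul]
  exact ⟨etaK * Z + 3 * Y, by linear_combination etaK * hZ + 21 * hY⟩

lemma atkinU_atkinU_towerA_congr {t : ℤ⟦X⟧} (ht : t * J 1 ^ 4 = X * J 7 ^ 4) :
    49 ∣ U₇ (U₇ towerA) - 14 * t := by
  have t_pow_congr : 7 ∣ U₇ (t ^ 4) - 3 * t := by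
    rw [← reduceMod_eq_iff, reduceMod, map_atkinU, ← reduceMod, map_pow, map_mul, map_ofNat,
      reduceMod_hauptmodul ht, atkinU_resT_pow_four]
  obtain ⟨Y, hY⟩ := t_pow_congr
  obtain ⟨Z, hZ⟩ := atkinU_congr 7 (atkinU_towerA_congr ht)
  rw [atkinU_ofNat_mul] at hZ
  exact ⟨t + 3 * Y + Z, by linear_combination hZ + 21 * hY⟩

lemma atkinU_towerA_mul_congr {t : ℤ⟦X⟧} (ht : t * J 1 ^ 4 = X * J 7 ^ 4) :
    49 ∣ U₇ (towerA * U₇ (U₇ towerA)) - 35 * (eisA * X ^ 2 * J 2 ^ 3 * etaK) := by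
  have etaF_congr : 7 ∣ U₇ (etaF * t) - -(eisA * X ^ 2 * J 2 ^ 3) := by
    rw [← reduceMod_eq_iff, reduceMod, map_atkinU, ← reduceMod, map_mul, ← resF,
      reduceMod_hauptmodul ht, atkinU_resF_mul_resT]
    simp only [map_neg, map_mul, map_pow, reduceMod_X, resA]
  have product_congr : 49 ∣ towerA * U₇ (U₇ towerA) - 14 * (V₇ etaK * (etaF * t)) := by
    convert (atkinU_atkinU_towerA_congr ht).mul_left towerA using 1
    rw [towerA]
    ring
  obtain ⟨Y, hY⟩ := etaF_congr
  obtain ⟨Z, hZ⟩ := atkinU_congr 7 product_congr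
  rw [atkinU_ofNat_mul, atkinU_expand_mul] at hZ
  exact ⟨Z + 2 * etaK * Y - eisA * X ^ 2 * J 2 ^ 3 * etaK, by
    linear_combination hZ + 14 * etaK * hY⟩

lemma reduceMod_p₀ {p₀ : ℤ⟦X⟧} (hp₀ : (1 + 7 * p₀) * (J 1 ^ 7 * J 14) = 8 * J 2 ^ 7 * J 7) :
    reduceMod 7 p₀ = 1 + resA * resD := by
  obtain ⟨Z, hZ⟩ := J_one_pow_seven_congr
  have hVZ := congrArg V₂ hZ
  simp only [map_sub, map_mul, map_pow, map_one, map_ofNat, expand_J_one,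
    expand_J _ (OfNat.ofNat_ne_zero 7)] at hVZ
  have div_seven : J 7 * J 14 * (p₀ - sigmaSeries 5 - 7 * p₀ * sigmaSeries 5 - 1 +
      8 * V₂ (sigmaSeries 5)) + 7 * ((1 + 7 * p₀) * Z * J 14 - 8 * V₂ Z * J 7) = 0 := by
    refine mul_left_cancel₀ (OfNat.ofNat_ne_zero 7) ?_
    linear_combination hp₀ - (1 + 7 * p₀) * J 14 * hZ + 8 * J 7 * hVZ
  have h := congrArg (reduceMod 7) div_seven
  have hAD := congrArg (reduceMod 7) eisA_mul_eisD
  simp only [map_mul, map_add, map_sub, map_one, map_zero, map_ofNat] at h hAD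
  have J_mul_ne_zero : reduceMod 7 (J 7) * reduceMod 7 (J 14) ≠ 0 :=
    mul_ne_zero (reduceMod_J_ne_zero (OfNat.ofNat_ne_zero 7))
      (reduceMod_J_ne_zero (OfNat.ofNat_ne_zero 14))
  refine mul_left_cancel₀ J_mul_ne_zero ?_
  grind [resA, resD]

lemma add_mul_J_two_pow_eq_resA_mul_J_one_pow {f : (ZMod 7)⟦X⟧} (hf : f * j₂ ^ 24 = j₁ ^ 24) :
    ((1 + resA * resD) * X + f) * j₂ ^ 32 = resA * j₁ ^ 40 := by
  have relation : (1 + resA * resD) * resD + resC = resA * resC ^ 2 := by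
    grind [resC, resD_eq, resA_mul_resB]
  linear_combination j₂ ^ 8 * hf - (1 + resA * resD) * j₂ ^ 16 * resD_mul_J_one_pow +
    j₁ ^ 8 * j₂ ^ 16 * relation +
    (resA * j₁ ^ 8 * (resC * j₂ ^ 8 + j₁ ^ 16) - j₁ ^ 8 * j₂ ^ 8) * resC_mul_J_two_pow

lemma coeff_modEq_of_dvd_sub {k : ℕ} [k.AtLeastTwo] {f g : ℤ⟦X⟧} (h : ofNat(k) ∣ f - g) (n : ℤ) :
    (ι f).coeff n ≡ (ι g).coeff n [ZMOD ofNat(k)] := by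
  rw [coeff_coe, coeff_coe]
  split_ifs
  · rfl
  · rw [Int.modEq_comm, Int.modEq_iff_dvd, ← map_sub]
    exact (ofNat_dvd_iff k _).mp h _

lemma ofPowerSeries_atkinU {U : LaurentSeries ℤ → LaurentSeries ℤ}
    (hU : ∀ (f : LaurentSeries ℤ) (n : ℤ), (U f).coeff n = f.coeff (7 * n)) (f : ℤ⟦X⟧) :
    U (ι f) = ι (U₇ f) := by
  ext n
  rw [hU, coeff_coe, coeff_coe, coeff_atkinU, Int.natAbs_mul]
  exact if_congr (by omega) rfl rfl

lemma eq_ofPowerSeries_towerA {A : LaurentSeries ℤ}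
    (hA : A * ι (J 1 ^ 16 * J 98 ^ 5) = ι (X ^ 12 * J 2 ^ 5 * J 49 ^ 16)) : A = ι towerA := by
  refine mul_right_cancel₀ (b := ι (J 1 ^ 16 * J 98 ^ 5)) ?_ ?_
  · rw [map_ne_zero_iff _ HahnSeries.ofPowerSeries_injective]
    exact mul_ne_zero (pow_ne_zero 16 (J_ne_zero one_ne_zero))
      (pow_ne_zero 5 (J_ne_zero (OfNat.ofNat_ne_zero 98)))
  · rw [hA, ← map_mul, towerA_mul_J]

lemma p₀_mul_X_add_congr {p₀ u v : ℤ⟦X⟧}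
    (hp₀ : (1 + 7 * p₀) * (J 1 ^ 7 * J 14) = 8 * J 2 ^ 7 * J 7)
    (hu : J 7 ^ 4 = J 1 ^ 4 * u) (hv : J 2 ^ 4 * J 7 ^ 4 = J 1 ^ 4 * J 14 ^ 4 * v) :
    7 ∣ (p₀ * X + v) * X ^ 2 * u ^ 3 - eisA * X ^ 2 * J 2 ^ 3 * etaK := by
  have j₁_ne_zero : j₁ ≠ 0 := reduceMod_J_ne_zero one_ne_zero
  have j₂_ne_zero : j₂ ≠ 0 := reduceMod_J_ne_zero two_ne_zero
  have reduceMod_u : reduceMod 7 u = j₁ ^ 24 := by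
    have h := congrArg (reduceMod 7) hu
    simp only [map_mul, map_pow, reduceMod_J_seven] at h
    refine mul_left_cancel₀ (pow_ne_zero 4 j₁_ne_zero) ?_
    linear_combination -h
  have reduceMod_v : reduceMod 7 v * j₂ ^ 24 = j₁ ^ 24 := by
    have h := congrArg (reduceMod 7) hv
    simp only [map_mul, map_pow, reduceMod_J_seven, reduceMod_J_fourteen] at h
    refine mul_left_cancel₀ (mul_ne_zero (pow_ne_zero 4 j₁_ne_zero) (pow_ne_zero 4 j₂_ne_zero)) ?_
    linear_combination -h
  rw [← reduceMod_eq_iff]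
  simp only [map_mul, map_add, map_pow, reduceMod_X, reduceMod_p₀ hp₀, reduceMod_u]
  refine mul_right_cancel₀ (pow_ne_zero 35 j₂_ne_zero) ?_
  rw [← resA]
  linear_combination
    X ^ 2 * j₁ ^ 72 * j₂ ^ 3 * add_mul_J_two_pow_eq_resA_mul_J_one_pow reduceMod_v -
    resA * X ^ 2 * j₂ ^ 3 * reduceMod_etaK_mul_J_two_pow

-- One factor `q` of `t ^ 3` clears the pole of `p₁`.
lemma exists_ofPowerSeries_eq_p₀_add_p₁_mul {t p₀ : ℤ⟦X⟧} {p₁ : LaurentSeries ℤ}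
    (ht : t * J 1 ^ 4 = X * J 7 ^ 4)
    (hp₀ : (1 + 7 * p₀) * (J 1 ^ 7 * J 14) = 8 * J 2 ^ 7 * J 7)
    (hp₁ : p₁ * ι (X * J 1 ^ 4 * J 14 ^ 4) = ι (J 2 ^ 4 * J 7 ^ 4)) :
    ∃ g : ℤ⟦X⟧, ι g = (ι p₀ + p₁) * ι t ^ 3 ∧ 7 ∣ g - eisA * X ^ 2 * J 2 ^ 3 * etaK := by
  have unit₁ : IsUnit (J 1 ^ 4) := (isUnit_J one_ne_zero).pow 4
  have unit₁₄ : IsUnit (J 1 ^ 4 * J 14 ^ 4) :=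
    unit₁.mul ((isUnit_J (OfNat.ofNat_ne_zero 14)).pow 4)
  obtain ⟨u, hu⟩ : J 1 ^ 4 ∣ J 7 ^ 4 := unit₁.dvd
  obtain ⟨v, hv⟩ : J 1 ^ 4 * J 14 ^ 4 ∣ J 2 ^ 4 * J 7 ^ 4 := unit₁₄.dvd
  have t_eq : t = X * u := unit₁.mul_right_cancel (by rw [ht, hu]; ring)
  have p₁_mul_X : p₁ * ι X = ι v := by
    refine (unit₁₄.map ι).mul_right_cancel ?_
    rw [mul_assoc, ← map_mul, ← mul_assoc, hp₁, hv, mul_comm _ v, map_mul]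
  refine ⟨(p₀ * X + v) * X ^ 2 * u ^ 3, ?_, p₀_mul_X_add_congr hp₀ hu hv⟩
  simp only [t_eq, map_mul, map_add, map_pow, ← p₁_mul_X]
  ring

lemma atkinU_towerA_mul_congr_of_congr {t g : ℤ⟦X⟧} (ht : t * J 1 ^ 4 = X * J 7 ^ 4)
    (hg : 7 ∣ g - eisA * X ^ 2 * J 2 ^ 3 * etaK) :
    49 ∣ U₇ (towerA * U₇ (U₇ towerA)) - 35 * g := by
  obtain ⟨Y, hY⟩ := hg
  obtain ⟨Z, hZ⟩ := atkinU_towerA_mul_congr ht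
  exact ⟨Z - 5 * Y, by linear_combination hZ - 35 * hY⟩

/-- in the d₅ tower, `L₁ ≡ 21·t⁴ (mod 49)`, `L₂ ≡ 14·t (mod 49)` and
`L₃ ≡ 35·(p₀+p₁)·t³ (mod 49)`, coefficientwise. Here `t = q·J_7^4/J_1^4`,
`p₀ = (8·J_2^7·J_7/(J_1^7·J_14) − 1)/7`, `p₁ = q⁻¹·J_2^4·J_7^4/(J_1^4·J_14^4)`. -/
theorem stmt14
    (t : PowerSeries ℤ) (ht : t * (J 1) ^ 4 = PowerSeries.X * (J 7) ^ 4)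
    (p0 : PowerSeries ℤ)
    (hp0 : (1 + 7 * p0) * ((J 1) ^ 7 * J 14) = 8 * (J 2) ^ 7 * J 7)
    (p1 : LaurentSeries ℤ)
    (hp1 : p1 * HahnSeries.ofPowerSeries ℤ ℤ (PowerSeries.X * (J 1) ^ 4 * (J 14) ^ 4)
        = HahnSeries.ofPowerSeries ℤ ℤ ((J 2) ^ 4 * (J 7) ^ 4))
    (U : LaurentSeries ℤ → LaurentSeries ℤ)
    (hU : ∀ (f : LaurentSeries ℤ) (n : ℤ), (U f).coeff n = f.coeff (7 * n))
    (A5 : LaurentSeries ℤ)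
    (hA5 : A5 * HahnSeries.ofPowerSeries ℤ ℤ ((J 1) ^ 16 * (J 98) ^ 5)
        = HahnSeries.ofPowerSeries ℤ ℤ (PowerSeries.X ^ 12 * (J 2) ^ 5 * (J 49) ^ 16))
    (L : ℕ → LaurentSeries ℤ) (hL0 : L 0 = 1)
    (hLodd : ∀ β : ℕ, L (2 * β + 1) = U (A5 * L (2 * β)))
    (hLeven : ∀ β : ℕ, L (2 * β + 2) = U (L (2 * β + 1))) :
    (∀ n : ℤ, Int.ModEq 49 ((L 1).coeff n)
        ((21 * (HahnSeries.ofPowerSeries ℤ ℤ t) ^ 4).coeff n))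
    ∧ (∀ n : ℤ, Int.ModEq 49 ((L 2).coeff n)
        ((14 * HahnSeries.ofPowerSeries ℤ ℤ t).coeff n))
    ∧ (∀ n : ℤ, Int.ModEq 49 ((L 3).coeff n)
        ((35 * ((HahnSeries.ofPowerSeries ℤ ℤ p0 + p1) *
            (HahnSeries.ofPowerSeries ℤ ℤ t) ^ 3)).coeff n)) := by
  have hA : A5 = ι towerA := eq_ofPowerSeries_towerA hA5
  have hU' := ofPowerSeries_atkinU hU
  have hL1 : L 1 = ι (U₇ towerA) := by
    rw [← hU', ← hA]
    simpa [hL0] using hLodd 0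
  have hL2 : L 2 = ι (U₇ (U₇ towerA)) := by rw [← hU', ← hL1, ← hLeven 0]
  have hL3 : L 3 = ι (U₇ (towerA * U₇ (U₇ towerA))) := by
    rw [← hU', map_mul, ← hA, ← hL2, ← hLodd 1]
  obtain ⟨g, g_eq, g_congr⟩ := exists_ofPowerSeries_eq_p₀_add_p₁_mul ht hp0 hp1
  rw [hL1, hL2, hL3, ← g_eq, ← map_pow]
  simp only [← map_ofNat ι, ← map_mul]
  exact ⟨coeff_modEq_of_dvd_sub (atkinU_towerA_congr ht),
    coeff_modEq_of_dvd_sub (atkinU_atkinU_towerA_congr ht),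
    coeff_modEq_of_dvd_sub (atkinU_towerA_mul_congr_of_congr ht g_congr)⟩
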